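/- Fix a > 7.5 and c > 0, and suppose n > max(4096, a + 3.5) and n/log n > 3(1+2c)(1/2+2c)/c. Let (X_0, Y_0) be a pair of M_n-valued random variables such that Y_0 is distributed according to U_n and ‖X_0 − Y_0‖_1 ≤ n^{−a} almost surely, where ‖X − Y‖_1 = ∑_{i,j} |X[i,j] − Y[i,j]|. Then for every integer T ≥ (1/2 + 2c)·n·log n there exists a coupling (X_t, Y_t)_{0 ≤ t ≤ T} extending (X_0, Y_0), in which the path (X_0, …, X_T) has the law of T steps of the Gibbs sampler on M_n started from X_0 and the path (Y_0, …, Y_T) has the law of T steps of the Gibbs sampler on M_n started from Y_0, such that P[X_T ≠ Y_T] ≤ 10·n^{3.75 − a/2} + n^{−c}. -/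

import Mathlib

open MeasureTheory

noncomputable section

/-- Uniform probability measure on a finset. -/
def unifOn {α : Type*} [MeasurableSpace α] (s : Finset α) : Measure α :=
  (s.card : ENNReal)⁻¹ • ∑ a ∈ s, Measure.dirac a

/-- Total variation distance between two measures. -/
def tvDist {α : Type*} [MeasurableSpace α] (μ ν : Measure α) : ℝ :=
  ⨆ A : {A : Set α // MeasurableSet A}, ((μ A).toReal - (ν A).toReal)

/-- The set `M_n` of nonnegative `n × 2` matrices with row sums `2` and column sums `n`. -/
def MSet (n : ℕ) : Set (Fin n × Fin 2 → ℝ) :=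
  {x | (∀ p, 0 ≤ x p) ∧ (∀ i : Fin n, x (i, 0) + x (i, 1) = 2) ∧
    (∀ j : Fin 2, ∑ i : Fin n, x (i, j) = n)}

/-- The uniform (normalized `(n-1)`-dimensional Hausdorff) measure on `M_n`. -/
def UM (n : ℕ) : Measure (Fin n × Fin 2 → ℝ) :=
  (μH[(n : ℝ) - 1] (MSet n))⁻¹ • (μH[(n : ℝ) - 1]).restrict (MSet n)

/-- One step of the Gibbs sampler on `M_n`, updating the pair of rows `u.1 = (i, j)`
using the uniform variable `u.2 = λ`. -/
def stepM (n : ℕ) (x : Fin n × Fin 2 → ℝ) (u : (Fin n × Fin n) × ℝ) :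
    Fin n × Fin 2 → ℝ := fun p =>
  let i := u.1.1
  let j := u.1.2
  let l := u.2
  let d := 2 - x (i, 0) - x (j, 0)
  if p = (i, 0) then (if 0 ≤ d then l * (2 - d) else 2 * l - (1 - l) * d)
  else if p = (j, 0) then (if 0 ≤ d then (1 - l) * (2 - d) else 2 * (1 - l) - l * d)
  else if p = (i, 1) then (if 0 ≤ d then 2 * (1 - l) + l * d else (1 - l) * (2 + d))
  else if p = (j, 1) then (if 0 ≤ d then 2 * l + (1 - l) * d else l * (2 + d))
  else x p

/-- The set of ordered pairs `(i, j)` with `i < j`. -/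
def pairsF (n : ℕ) : Finset (Fin n × Fin n) := Finset.univ.filter fun p => p.1 < p.2

/-- Law of the random update datum: `(i, j)` uniform among pairs `i < j`, and
`λ` uniform on `[0,1]`. -/
def driveM (n : ℕ) : Measure ((Fin n × Fin n) × ℝ) :=
  (unifOn (pairsF n)).prod ((volume : Measure ℝ).restrict (Set.Icc 0 1))

/-- Law of the Gibbs sampler on `M_n` after `T` steps started at `x`. -/
def lawM (n : ℕ) (x : Fin n × Fin 2 → ℝ) (T : ℕ) : Measure (Fin n × Fin 2 → ℝ) :=
  Measure.map (fun ω : Fin T → (Fin n × Fin n) × ℝ => (List.ofFn ω).foldl (stepM n) x)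
    (Measure.pi fun _ => driveM n)

/-- Law of the `(T+1)`-step path of the Gibbs sampler on `M_n` with initial distribution `μ`. -/
def pathM (n T : ℕ) (μ : Measure (Fin n × Fin 2 → ℝ)) :
    Measure (Fin (T + 1) → Fin n × Fin 2 → ℝ) :=
  Measure.map (fun p : (Fin n × Fin 2 → ℝ) × (Fin T → (Fin n × Fin n) × ℝ) =>
      fun s : Fin (T + 1) => ((List.ofFn p.2).take s).foldl (stepM n) p.1)
    (μ.prod (Measure.pi fun _ => driveM n))

/-!
Both chains resample the same pairs of rows, which are drawn in advance. Read backwards in time,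
these pairs are edges merging the rows into blocks, starting from singletons. Running forward, the
coupling maintains that over each current block the differences of the first columns sum to zero
and have `ℓ¹` norm at most `D`. An edge inside a block preserves this when both chains use the same
uniform variable. An edge between two blocks splits one block into two, and the uniform variables
must be coupled so that both halves are balanced; if the row pair of the stationary chain is
resampled on an interval of length at least `r`, this fails with probability at most `9 D / r`, and
by stationarity the interval is shorter than `r` with probability at most `2 n r`.

There are at most `n` splitting edges. At time `T` the blocks are singletons, so the two chains
agree. At time `0` there is a single block, for which the invariant holds, unless the edges fail to
connect all rows; as for the coupon collector, this has probability at most `n ^ (-c)`. The theorem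
takes `D = n ^ (-a)` and `r = n ^ (-a / 2)`.
-/

section UniformCoupling

/-- The uniform law on the unit interval, as it appears in `driveM`. -/
def unitUniform : Measure ℝ := volume.restrict (Set.Icc 0 1)

instance : IsProbabilityMeasure unitUniform := ⟨by simp [unitUniform]⟩

lemma ae_unitUniform_mem_Icc : ∀ᵐ l ∂unitUniform, l ∈ Set.Icc (0 : ℝ) 1 :=
  ae_restrict_mem measurableSet_Icc

lemma map_fract_volume_restrict_Ioc (t : ℝ) :
    (volume.restrict (Set.Ioc t (t + 1))).map Int.fract = unitUniform := by
  have hshift : (volume.restrict (Set.Ioc t (t + 1))).map Int.fract =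
      (volume.restrict (Set.Ioc 0 (0 + 1))).map (Int.fract : ℝ → ℝ) := by
    ext A hA
    rw [Measure.map_apply measurable_fract hA, Measure.map_apply measurable_fract hA,
      Measure.restrict_apply (measurable_fract hA), Measure.restrict_apply (measurable_fract hA)]
    refine (isAddFundamentalDomain_Ioc (μ := volume) one_pos t).measure_set_eq
      (isAddFundamentalDomain_Ioc one_pos 0) (measurable_fract hA) ?_
    rintro ⟨_, k, rfl⟩
    ext x
    change Int.fract (k • (1 : ℝ) + x) ∈ A ↔ Int.fract x ∈ A
    rw [zsmul_one, Int.fract_intCast_add]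
  have hid : (Int.fract : ℝ → ℝ) =ᵐ[volume.restrict (Set.Ico 0 1)] id := by
    filter_upwards [ae_restrict_mem measurableSet_Ico] with x hx
    exact Int.fract_eq_self.2 hx
  rw [hshift, zero_add, ← Measure.restrict_congr_set Ico_ae_eq_Ioc, Measure.map_congr hid,
    Measure.map_id, unitUniform, Measure.restrict_congr_set Ico_ae_eq_Icc]

lemma map_fract_add_unitUniform (β : ℝ) :
    unitUniform.map (fun z => Int.fract (β + z)) = unitUniform := by
  have hpre : (fun z => β + z) ⁻¹' Set.Ioc β (β + 1) = Set.Ioc 0 1 := by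
    rw [Set.preimage_const_add_Ioc, sub_self, add_sub_cancel_left]
  have hadd : unitUniform.map (fun z => β + z) = volume.restrict (Set.Ioc β (β + 1)) := by
    rw [unitUniform, ← Measure.restrict_congr_set Ioc_ae_eq_Icc, ← hpre]
    exact ((measurePreserving_add_left volume β).restrict_preimage measurableSet_Ioc).map_eq
  have hcomp := Measure.map_map (μ := unitUniform) measurable_fract (measurable_const_add β)
  rw [hadd, map_fract_volume_restrict_Ioc] at hcomp
  exact hcomp.symm

/-- A function of two independent uniform variables which is again uniform, and which equals
`α * w.1` with probability `α`. -/
def scaleMix (α : ℝ) (w : ℝ × ℝ) : ℝ := if w.2 ≤ α then α * w.1 else w.2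

@[fun_prop]
lemma measurable_scaleMix_uncurry : Measurable fun p : ℝ × ℝ × ℝ => scaleMix p.1 p.2 :=
  Measurable.ite (measurableSet_le (by fun_prop) (by fun_prop)) (by fun_prop) (by fun_prop)

lemma ofReal_smul_map_affine_unitUniform {α : ℝ} (h0 : 0 ≤ α) (β : ℝ) :
    ENNReal.ofReal α • unitUniform.map (fun z => β + α * z) =
      volume.restrict (Set.Icc β (β + α)) := by
  rcases h0.eq_or_lt with rfl | h0
  · simp
  have hpre : (fun z => α * z) ⁻¹' ((fun z => β + z) ⁻¹' Set.Icc β (β + α)) = Set.Icc 0 1 := by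
    rw [Set.preimage_const_add_Icc, sub_self, add_sub_cancel_left,
      Set.preimage_const_mul_Icc₀ _ _ h0, zero_div, div_self h0.ne']
  have hmeas : Measurable fun z : ℝ => β + α * z := by fun_prop
  ext A hA
  rw [Measure.smul_apply, Measure.map_apply hmeas hA, unitUniform,
    Measure.restrict_apply (hmeas hA), ← hpre]
  change _ • volume ((fun z => α * z) ⁻¹' ((fun z => β + z) ⁻¹' (A ∩ Set.Icc β (β + α)))) = _
  rw [Real.volume_preimage_mul_left h0.ne', measure_preimage_add, abs_of_pos (inv_pos.2 h0),
    smul_eq_mul, ← mul_assoc, ← ENNReal.ofReal_mul h0.le, mul_inv_cancel₀ h0.ne',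
    ENNReal.ofReal_one, one_mul, Measure.restrict_apply hA]

lemma map_scaleMix {α : ℝ} (h0 : 0 ≤ α) (h1 : α ≤ 1) :
    (unitUniform.prod unitUniform).map (scaleMix α) = unitUniform := by
  have hmeas : Measurable (scaleMix α) := by fun_prop
  have hlow : unitUniform.restrict (Set.Iic α) = volume.restrict (Set.Icc 0 α) := by
    rw [unitUniform, Measure.restrict_restrict measurableSet_Iic, Set.inter_comm,
      ← Set.Ici_inter_Iic, Set.inter_assoc, Set.Iic_inter_Iic, min_eq_right h1, Set.Ici_inter_Iic]
  ext A hA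
  have hsection_low : ∀ y ∈ Set.Iic α, unitUniform ((fun x => (x, y)) ⁻¹' (scaleMix α ⁻¹' A)) =
      unitUniform.map (fun z => α * z) A := fun y hy => by
    rw [Measure.map_apply (measurable_const_mul α) hA]
    congr 1
    ext x
    simp only [Set.mem_preimage, scaleMix, if_pos (Set.mem_Iic.1 hy)]
  have hsection_high : ∀ y ∈ (Set.Iic α)ᶜ,
      unitUniform ((fun x => (x, y)) ⁻¹' (scaleMix α ⁻¹' A)) = A.indicator 1 y := fun y hy => by
    by_cases hyA : y ∈ A <;> simp [Set.preimage, scaleMix, (Set.mem_Iic.not.1 hy), hyA]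
  rw [Measure.map_apply hmeas hA, Measure.prod_apply_symm (hmeas hA),
    ← lintegral_add_compl _ measurableSet_Iic,
    setLIntegral_congr_fun measurableSet_Iic hsection_low,
    setLIntegral_congr_fun measurableSet_Iic.compl hsection_high, lintegral_indicator_one hA,
    setLIntegral_const, mul_comm, ← Measure.restrict_apply_univ, hlow]
  simp only [Measure.restrict_apply_univ, Real.volume_Icc, sub_zero]
  have hscale := ofReal_smul_map_affine_unitUniform h0 0
  simp only [zero_add] at hscale
  rw [← smul_eq_mul, ← Measure.smul_apply, hscale, ← hlow, ← Measure.add_apply,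
    Measure.restrict_add_restrict_compl measurableSet_Iic]

/-- Two uniform variables built from the uniform pair `w` so that, with probability close to one
when `κ` is small and `A` is close to `B`, they satisfy `A * u.1 = κ + B * u.2`. -/
def coupledUniforms (A B κ : ℝ) (w : ℝ × ℝ) : ℝ × ℝ :=
  if B ≤ A then (Int.fract (κ / A + scaleMix (B / A) w), w.1)
  else (w.1, Int.fract (-κ / B + scaleMix (A / B) w))

lemma measurable_coupledUniforms_uncurry :
    Measurable fun p : (ℝ × ℝ × ℝ) × ℝ × ℝ => coupledUniforms p.1.1 p.1.2.1 p.1.2.2 p.2 :=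
  Measurable.ite (measurableSet_le (by fun_prop) (by fun_prop))
    ((measurable_fract.comp (by fun_prop)).prodMk (by fun_prop))
    (Measurable.prodMk (by fun_prop) (measurable_fract.comp (by fun_prop)))

lemma map_fract_add_scaleMix {α : ℝ} (h0 : 0 ≤ α) (h1 : α ≤ 1) (β : ℝ) :
    (unitUniform.prod unitUniform).map (fun w => Int.fract (β + scaleMix α w)) = unitUniform := by
  have hcomp := Measure.map_map (μ := unitUniform.prod unitUniform)
    (measurable_fract.comp (measurable_const_add β)) (by fun_prop : Measurable (scaleMix α))
  rw [map_scaleMix h0 h1] at hcomp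
  exact hcomp.symm.trans (map_fract_add_unitUniform β)

lemma map_coupledUniforms_fst {A B : ℝ} (hA : 0 ≤ A) (hB : 0 ≤ B) (κ : ℝ) :
    (unitUniform.prod unitUniform).map (fun w => (coupledUniforms A B κ w).1) = unitUniform := by
  unfold coupledUniforms
  split_ifs with h
  · exact map_fract_add_scaleMix (div_nonneg hB hA) (div_le_one_of_le₀ h hA) _
  · exact measurePreserving_fst.map_eq

lemma map_coupledUniforms_snd {A B : ℝ} (hA : 0 ≤ A) (hB : 0 ≤ B) (κ : ℝ) :
    (unitUniform.prod unitUniform).map (fun w => (coupledUniforms A B κ w).2) = unitUniform := by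
  unfold coupledUniforms
  split_ifs with h
  · exact measurePreserving_fst.map_eq
  · exact map_fract_add_scaleMix (div_nonneg hA hB) (div_le_one_of_le₀ (le_of_not_ge h) hB) _

lemma unitUniform_Iic_le (x : ℝ) : unitUniform (Set.Iic x) ≤ ENNReal.ofReal x := by
  rw [unitUniform, Measure.restrict_apply measurableSet_Iic, Set.inter_comm]
  exact (measure_mono (t := Set.Icc 0 x) fun y hy => ⟨hy.1.1, hy.2⟩).trans (by simp)

lemma unitUniform_Ici_le (x : ℝ) : unitUniform (Set.Ici x) ≤ ENNReal.ofReal (1 - x) := by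
  rw [unitUniform, Measure.restrict_apply measurableSet_Ici, Set.inter_comm]
  exact (measure_mono (t := Set.Icc x 1) fun y hy => ⟨hy.2, hy.1.2⟩).trans (by simp)

lemma measure_fract_add_scaleMix_ne_le {α : ℝ} (h0 : 0 < α) (h1 : α ≤ 1) (β : ℝ) :
    (unitUniform.prod unitUniform) {w | Int.fract (β + scaleMix α w) ≠ β + α * w.1} ≤
      ENNReal.ofReal (1 - α + 2 * (|β| / α)) := by
  have hsub : {w : ℝ × ℝ | Int.fract (β + scaleMix α w) ≠ β + α * w.1} ⊆
      Set.univ ×ˢ Set.Ici α ∪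
        (Set.Iic (|β| / α) ×ˢ Set.univ ∪ Set.Ici (1 - |β| / α) ×ˢ Set.univ) := by
    intro w
    contrapose
    simp only [Set.mem_union, Set.mem_prod, Set.mem_univ, true_and, and_true, Set.mem_Ici,
      Set.mem_Iic, not_or, not_le]
    rintro ⟨hα, hlow, hhigh⟩
    rw [div_lt_iff₀' h0] at hlow
    have hhigh' : α * w.1 < α - |β| := by
      calc α * w.1 < α * (1 - |β| / α) := by gcongr
        _ = α - |β| := by field_simp
    rw [Set.notMem_ofPred_iff, not_not, scaleMix, if_pos hα.le, Int.fract_eq_self]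
    constructor <;> linarith [neg_abs_le β, le_abs_self β]
  rw [two_mul, ENNReal.ofReal_add (by linarith) (by positivity),
    ENNReal.ofReal_add (by positivity) (by positivity)]
  refine (measure_mono hsub).trans <| (measure_union_le _ _).trans <|
    add_le_add ?_ <| (measure_union_le _ _).trans <| add_le_add ?_ ?_ <;>
    rw [Measure.prod_prod, measure_univ]
  · rw [one_mul]
    exact unitUniform_Ici_le α
  · rw [mul_one]
    exact unitUniform_Iic_le _
  · rw [mul_one]
    exact (unitUniform_Ici_le _).trans_eq (by rw [sub_sub_cancel])

lemma measure_coupledUniforms_ne_le {A B κ D r : ℝ} (hB : r ≤ B) (hAB : |A - B| ≤ D)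
    (hκ : |κ| ≤ 2 * D) (hr : 0 < r) (hD : 2 * D ≤ r) :
    (unitUniform.prod unitUniform)
        {w | A * (coupledUniforms A B κ w).1 ≠ κ + B * (coupledUniforms A B κ w).2} ≤
      ENNReal.ofReal (9 * D / r) := by
  obtain ⟨hAB₁, hAB₂⟩ := abs_le.1 hAB
  have hA0 : 0 < A := by linarith
  have hB0 : 0 < B := by linarith
  have hsum : ∀ u v : ℝ, u ≤ D / r → v ≤ 4 * D / r → u + 2 * v ≤ 9 * D / r := fun u v hu hv => by
    linarith [show 9 * D / r = D / r + 2 * (4 * D / r) by ring]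
  rcases le_or_gt B A with h | h
  · refine (measure_mono fun w hw => ?_).trans <|
      (measure_fract_add_scaleMix_ne_le (div_pos hB0 hA0) ((div_le_one hA0).2 h) (κ / A)).trans <|
      ENNReal.ofReal_le_ofReal (hsum _ _ ?_ ?_)
    · simp only [Set.mem_ofPred_eq, coupledUniforms, if_pos h] at hw ⊢
      contrapose! hw
      rw [hw]
      field_simp
    · rw [one_sub_div hA0.ne', div_le_div_iff₀ hA0 hr]
      nlinarith
    · rw [abs_div, abs_of_pos hA0, div_div_div_cancel_right₀ hA0.ne', div_le_div_iff₀ hB0 hr]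
      nlinarith [abs_nonneg κ]
  · refine (measure_mono fun w hw => ?_).trans <|
      (measure_fract_add_scaleMix_ne_le (div_pos hA0 hB0) ((div_le_one hB0).2 h.le)
        (-κ / B)).trans <| ENNReal.ofReal_le_ofReal (hsum _ _ ?_ ?_)
    · simp only [Set.mem_ofPred_eq, coupledUniforms, if_neg h.not_ge] at hw ⊢
      contrapose! hw
      rw [hw]
      field_simp
      ring
    · rw [one_sub_div hB0.ne', div_le_div_iff₀ hB0 hr]
      nlinarith
    · rw [abs_div, abs_of_pos hB0, div_div_div_cancel_right₀ hB0.ne', div_le_div_iff₀ hA0 hr,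
        abs_neg]
      nlinarith [abs_nonneg κ]

end UniformCoupling

section BlockSums

variable {ι β : Type*}

lemma sum_add_pair_eq_of_eqOn {S : Finset ι} {i j : ι} (hij : i ≠ j) (hi : i ∈ S) (hj : j ∈ S)
    {f g : ι → ℝ} (h : ∀ k, k ≠ i → k ≠ j → g k = f k) :
    ∑ k ∈ S, g k + (f i + f j) = ∑ k ∈ S, f k + (g i + g j) := by
  classical
  have hpair : ∑ k ∈ {i, j}, (g k - f k) = ∑ k ∈ S, (g k - f k) := by
    refine Finset.sum_subset (Finset.insert_subset hi (Finset.singleton_subset_iff.2 hj)) ?_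
    intro k _ hk
    simp only [Finset.mem_insert, Finset.mem_singleton, not_or] at hk
    rw [h k hk.1 hk.2, sub_self]
  rw [Finset.sum_pair hij, Finset.sum_sub_distrib] at hpair
  linarith

lemma sum_abs_le_sum_union_abs [DecidableEq ι] {S S' : Finset ι} (hS : Disjoint S S') {i : ι}
    (hi : i ∈ S) {f g : ι → ℝ} (h : ∀ k ∈ S, k ≠ i → g k = f k) (hg : ∑ k ∈ S, g k = 0)
    (hf : ∑ k ∈ S ∪ S', f k = 0) : ∑ k ∈ S, |g k| ≤ ∑ k ∈ S ∪ S', |f k| := by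
  have heq : ∀ k ∈ S.erase i, g k = f k := fun k hk =>
    h k (Finset.mem_of_mem_erase hk) (Finset.ne_of_mem_erase hk)
  rw [Finset.sum_union hS, ← Finset.add_sum_erase _ _ hi] at hf ⊢
  rw [← Finset.add_sum_erase _ _ hi, Finset.sum_congr rfl heq] at hg
  rw [← Finset.add_sum_erase _ _ hi, Finset.sum_congr rfl fun k hk => congrArg abs (heq k hk)]
  have hgi : g i = f i + ∑ k ∈ S', f k := by linarith
  have hbound : |g i| ≤ |f i| + ∑ k ∈ S', |f k| := by
    rw [hgi]
    exact (abs_add_le _ _).trans (by gcongr; exact Finset.abs_sum_le_sum_abs _ _)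
  linarith

variable [DecidableEq β]

/-- The labelling obtained from `L` by giving the class of `e.1` the label of `e.2`. Labellings
encode partitions: the blocks are the fibres. -/
def mergeLabels (L : ι → β) (e : ι × ι) : ι → β := fun k => if L k = L e.1 then L e.2 else L k

lemma mergeLabels_of_eq {L : ι → β} {e : ι × ι} (h : L e.1 = L e.2) : mergeLabels L e = L := by
  funext k
  unfold mergeLabels
  split_ifs with hk
  · rw [hk, h]
  · rfl

variable [Fintype ι]

/-- The block of label `b` in the partition encoded by `L`. -/
def block (L : ι → β) (b : β) : Finset ι := {k | L k = b}

@[simp]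
lemma mem_block {L : ι → β} {b : β} {k : ι} : k ∈ block L b ↔ L k = b := Finset.mem_filter_univ k

lemma block_mergeLabels [DecidableEq ι] (L : ι → β) (i j : ι) :
    block (mergeLabels L (i, j)) (L j) = block L (L i) ∪ block L (L j) := by
  ext k
  by_cases hk : L k = L i <;> simp [mergeLabels, hk]

lemma block_mergeLabels_of_ne (L : ι → β) {i j : ι} {b : β} (hi : b ≠ L i) (hj : b ≠ L j) :
    block (mergeLabels L (i, j)) b = block L b := by
  ext k
  by_cases hk : L k = L i <;> simp [mergeLabels, hk, hi.symm, hj.symm]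

lemma disjoint_block (L : ι → β) {b b' : β} (h : b ≠ b') :
    Disjoint (block L b) (block L b') :=
  Finset.disjoint_filter.2 fun _ _ hk hk' => h (hk.symm.trans hk')

/-- The entries of `f` sum to zero over each block of the labelling `L`, and have `ℓ¹` norm at
most `D` there. -/
def BlockBalanced (L : ι → β) (D : ℝ) (f : ι → ℝ) : Prop :=
  ∀ b, ∑ k ∈ block L b, f k = 0 ∧ ∑ k ∈ block L b, |f k| ≤ D

lemma BlockBalanced.of_pair_contraction {L : ι → β} {D : ℝ} {f g : ι → ℝ}
    (hf : BlockBalanced L D f) {i j : ι} (hij : i ≠ j) (hL : L i = L j)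
    (h : ∀ k, k ≠ i → k ≠ j → g k = f k) (hsum : g i + g j = f i + f j)
    (habs : |g i| + |g j| ≤ |f i| + |f j|) : BlockBalanced L D g := by
  intro b
  by_cases hb : L i = b
  · have hi : i ∈ block L b := by simp [hb]
    have hj : j ∈ block L b := by simp [← hL, hb]
    have hg := sum_add_pair_eq_of_eqOn hij hi hj h
    have hg' := sum_add_pair_eq_of_eqOn hij hi hj (f := fun k => |f k|) (g := fun k => |g k|)
      fun k hki hkj => congrArg abs (h k hki hkj)
    exact ⟨by linarith [(hf b).1], by linarith [(hf b).2]⟩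
  · have heq : ∀ k ∈ block L b, g k = f k := by
      intro k hk
      rw [mem_block] at hk
      exact h k (by rintro rfl; exact hb hk) (by rintro rfl; exact hb (hL.trans hk))
    rw [Finset.sum_congr rfl heq, Finset.sum_congr rfl fun k hk => congrArg abs (heq k hk)]
    exact hf b

lemma BlockBalanced.of_mergeLabels {L : ι → β} {D : ℝ} {f g : ι → ℝ} {i j : ι}
    (hf : BlockBalanced (mergeLabels L (i, j)) D f) (hL : L i ≠ L j)
    (h : ∀ k, k ≠ i → k ≠ j → g k = f k) (hsum : g i + g j = f i + f j)
    (hi : ∑ k ∈ block L (L i), g k = 0) : BlockBalanced L D g := by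
  classical
  have hij : i ≠ j := fun hij => hL (congrArg L hij)
  have hdisj := disjoint_block L hL
  obtain ⟨hf0, hfD⟩ := hf (L j)
  rw [block_mergeLabels] at hf0 hfD
  have hj : ∑ k ∈ block L (L j), g k = 0 := by
    have hunion := sum_add_pair_eq_of_eqOn (S := block L (L i) ∪ block L (L j)) hij
      (by simp) (by simp) h
    rw [hf0, Finset.sum_union hdisj, hi] at hunion
    linarith
  intro b
  rcases eq_or_ne b (L i) with rfl | hbi
  · refine ⟨hi, (sum_abs_le_sum_union_abs hdisj (i := i) (by simp) ?_ hi hf0).trans hfD⟩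
    exact fun k hk hki => h k hki (by rintro rfl; exact hL (mem_block.1 hk).symm)
  rcases eq_or_ne b (L j) with rfl | hbj
  · rw [Finset.union_comm] at hf0 hfD
    refine ⟨hj, (sum_abs_le_sum_union_abs hdisj.symm (i := j) (by simp) ?_ hj hf0).trans hfD⟩
    exact fun k hk hkj => h k (by rintro rfl; exact hL (mem_block.1 hk)) hkj
  · have heq : ∀ k ∈ block L b, g k = f k := by
      intro k hk
      rw [mem_block] at hk
      exact h k (by rintro rfl; exact hbi hk.symm) (by rintro rfl; exact hbj hk.symm)
    rw [Finset.sum_congr rfl heq, Finset.sum_congr rfl fun k hk => congrArg abs (heq k hk),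
      ← block_mergeLabels_of_ne L hbi hbj]
    exact hf b

lemma BlockBalanced.of_subsingleton_range {L : ι → β} (hL : ∀ k k', L k = L k') {D : ℝ}
    {f : ι → ℝ} (hf : ∑ k, f k = 0) (hD : ∑ k, |f k| ≤ D) : BlockBalanced L D f := by
  intro b
  by_cases hb : ∃ k, L k = b
  · obtain ⟨k, rfl⟩ := hb
    rw [block, Finset.filter_true_of_mem fun k' _ => hL k' k]
    exact ⟨hf, hD⟩
  · rw [block, Finset.filter_false_of_mem fun k _ hk => hb ⟨k, hk⟩]
    simpa using (Finset.sum_nonneg fun k _ => abs_nonneg (f k)).trans hD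

lemma BlockBalanced.eq_zero_of_injective {L : ι → β} (hL : Function.Injective L) {D : ℝ}
    {f : ι → ℝ} (hf : BlockBalanced L D f) (k : ι) : f k = 0 := by
  have hblock : block L (L k) = {k} := by
    ext k'
    rw [mem_block, hL.eq_iff, Finset.mem_singleton]
  have hk := (hf (L k)).1
  rwa [hblock, Finset.sum_singleton] at hk

end BlockSums

section Step

variable {n : ℕ}

/-- The ambient space of `MSet n`: real `n × 2` matrices. -/
abbrev NarrowMatrix (n : ℕ) : Type := Fin n × Fin 2 → ℝ

/-- Left end of the interval on which an entry of the first column is resampled, when the sum of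
that entry and its partner is `s`. -/
def pairLower (s : ℝ) : ℝ := max 0 (s - 2)

/-- Right end of the resampling interval, see `pairLower`. -/
def pairUpper (s : ℝ) : ℝ := min s 2

/-- Length of the resampling interval, see `pairLower`. -/
def pairLength (s : ℝ) : ℝ := pairUpper s - pairLower s

@[fun_prop]
lemma measurable_pairLower : Measurable pairLower := by
  unfold pairLower
  fun_prop

@[fun_prop]
lemma measurable_pairLength : Measurable pairLength := by
  unfold pairLength pairUpper
  fun_prop

lemma pairLower_add_pairUpper (s : ℝ) : pairLower s + pairUpper s = s := by
  unfold pairLower pairUpper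
  rcases le_total s 2 with h | h
  · rw [max_eq_left (by linarith), min_eq_left h, zero_add]
  · rw [max_eq_right (by linarith), min_eq_right h, sub_add_cancel]

lemma pairLower_nonneg (s : ℝ) : 0 ≤ pairLower s := le_max_left _ _

lemma pairUpper_le_two (s : ℝ) : pairUpper s ≤ 2 := min_le_right _ _

lemma pairLength_eq_self {s : ℝ} (hs : s ≤ 2) : pairLength s = s := by
  rw [pairLength, pairUpper, pairLower, min_eq_left hs, max_eq_left (by linarith), sub_zero]

lemma pairLength_eq_four_sub {s : ℝ} (hs : 2 ≤ s) : pairLength s = 4 - s := by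
  rw [pairLength, pairUpper, pairLower, min_eq_right hs, max_eq_right (by linarith)]
  ring

lemma pairLength_nonneg {s : ℝ} (h0 : 0 ≤ s) (h4 : s ≤ 4) : 0 ≤ pairLength s := by
  rcases le_total s 2 with h | h
  · rwa [pairLength_eq_self h]
  · rw [pairLength_eq_four_sub h]
    linarith

lemma abs_pairLower_sub_add_abs_pairUpper_sub (s t : ℝ) :
    |pairLower s - pairLower t| + |pairUpper s - pairUpper t| = |s - t| := by
  wlog hst : t ≤ s generalizing s t
  · rw [abs_sub_comm (pairLower s), abs_sub_comm (pairUpper s), abs_sub_comm s,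
      this t s (le_of_not_ge hst)]
  have hlower : pairLower t ≤ pairLower s := max_le_max le_rfl (by linarith)
  have hupper : pairUpper t ≤ pairUpper s := min_le_min hst le_rfl
  rw [abs_of_nonneg (sub_nonneg.2 hlower), abs_of_nonneg (sub_nonneg.2 hupper),
    abs_of_nonneg (sub_nonneg.2 hst)]
  linarith [pairLower_add_pairUpper s, pairLower_add_pairUpper t]

lemma abs_pairLower_sub_le (s t : ℝ) : |pairLower s - pairLower t| ≤ |s - t| := by
  rw [← abs_pairLower_sub_add_abs_pairUpper_sub s t]
  exact le_add_of_nonneg_right (abs_nonneg (pairUpper s - pairUpper t))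

lemma abs_pairLength_sub_le (s t : ℝ) : |pairLength s - pairLength t| ≤ |s - t| := by
  rw [← abs_pairLower_sub_add_abs_pairUpper_sub s t, add_comm, pairLength, pairLength,
    sub_sub_sub_comm]
  exact abs_sub _ _

lemma stepM_apply_fst (x : NarrowMatrix n) (i j : Fin n) (l : ℝ) :
    stepM n x ((i, j), l) (i, 0) =
      pairLower (x (i, 0) + x (j, 0)) + l * pairLength (x (i, 0) + x (j, 0)) := by
  have hd : 2 - x (i, 0) - x (j, 0) = 2 - (x (i, 0) + x (j, 0)) := by ring
  simp only [stepM, if_true, hd, pairLength, pairLower, pairUpper, sub_nonneg]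
  split_ifs with h
  · rw [max_eq_left (by linarith), min_eq_left h]
    ring
  · rw [max_eq_right (by linarith), min_eq_right (by linarith)]
    ring

lemma stepM_apply_snd (x : NarrowMatrix n) {i j : Fin n} (hij : i ≠ j) (l : ℝ) :
    stepM n x ((i, j), l) (j, 0) =
      pairUpper (x (i, 0) + x (j, 0)) - l * pairLength (x (i, 0) + x (j, 0)) := by
  have hd : 2 - x (i, 0) - x (j, 0) = 2 - (x (i, 0) + x (j, 0)) := by ring
  simp only [stepM, Prod.mk.injEq, hij.symm, false_and, if_true, if_false, hd, pairLength,
    pairLower, pairUpper, sub_nonneg]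
  split_ifs with h
  · rw [max_eq_left (by linarith), min_eq_left h]
    ring
  · rw [max_eq_right (by linarith), min_eq_right (by linarith)]
    ring

lemma stepM_apply_of_ne (x : NarrowMatrix n) {i j k : Fin n} (l : ℝ) (hi : k ≠ i) (hj : k ≠ j)
    (c : Fin 2) : stepM n x ((i, j), l) (k, c) = x (k, c) := by
  simp [stepM, hi, hj]

lemma stepM_add_eq (x : NarrowMatrix n) {i j : Fin n} (hij : i ≠ j) (l : ℝ) :
    stepM n x ((i, j), l) (i, 0) + stepM n x ((i, j), l) (j, 0) = x (i, 0) + x (j, 0) := by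
  rw [stepM_apply_fst, stepM_apply_snd x hij]
  linarith [pairLower_add_pairUpper (x (i, 0) + x (j, 0))]

lemma stepM_row_sum {x : NarrowMatrix n} (hx : ∀ k, x (k, 0) + x (k, 1) = 2) (e : Fin n × Fin n)
    (l : ℝ) (k : Fin n) : stepM n x (e, l) (k, 0) + stepM n x (e, l) (k, 1) = 2 := by
  simp only [stepM, Prod.mk.injEq, and_true, zero_ne_one, one_ne_zero, and_false, if_false]
  split_ifs <;> first | exact hx k | ring

lemma eq_of_fst_col_eq {x y : NarrowMatrix n} (hx : ∀ k, x (k, 0) + x (k, 1) = 2)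
    (hy : ∀ k, y (k, 0) + y (k, 1) = 2) (h : ∀ k, x (k, 0) = y (k, 0)) : x = y := by
  funext ⟨k, c⟩
  revert c
  exact Fin.forall_fin_two.2 ⟨h k, by linarith [hx k, hy k, h k]⟩

lemma mem_MSet_iff {x : NarrowMatrix n} : x ∈ MSet n ↔
    (∀ k, x (k, 0) ∈ Set.Icc 0 2) ∧ (∀ k, x (k, 0) + x (k, 1) = 2) ∧ ∑ k, x (k, 0) = n := by
  constructor
  · rintro ⟨hpos, hrow, hcol⟩
    exact ⟨fun k => ⟨hpos _, by linarith [hrow k, hpos (k, 1)]⟩, hrow, hcol 0⟩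
  · rintro ⟨hmem, hrow, hcol⟩
    have hsnd : ∀ k, x (k, 1) = 2 - x (k, 0) := fun k => by linarith [hrow k]
    refine ⟨?_, hrow, Fin.forall_fin_two.2 ⟨hcol, ?_⟩⟩
    · refine fun p => (Fin.forall_fin_two (p := fun c => 0 ≤ x (p.1, c))).2
        ⟨(hmem p.1).1, ?_⟩ p.2
      linarith [hsnd p.1, (hmem p.1).2]
    · simp only [hsnd, Finset.sum_sub_distrib, hcol, Finset.sum_const, Finset.card_univ,
        Fintype.card_fin, nsmul_eq_mul]
      ring

lemma pair_sum_mem_Icc {x : NarrowMatrix n} (hx : x ∈ MSet n) (i j : Fin n) :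
    x (i, 0) + x (j, 0) ∈ Set.Icc 0 4 := by
  have hmem := (mem_MSet_iff.1 hx).1
  exact ⟨by linarith [(hmem i).1, (hmem j).1], by linarith [(hmem i).2, (hmem j).2]⟩

lemma stepM_mem_MSet {x : NarrowMatrix n} (hx : x ∈ MSet n) {i j : Fin n} (hij : i ≠ j) {l : ℝ}
    (hl : l ∈ Set.Icc (0 : ℝ) 1) : stepM n x ((i, j), l) ∈ MSet n := by
  obtain ⟨hmem, hrow, hcol⟩ := mem_MSet_iff.1 hx
  obtain ⟨hs0, hs4⟩ := pair_sum_mem_Icc hx i j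
  have hlen := pairLength_nonneg hs0 hs4
  have hlower := pairLower_nonneg (x (i, 0) + x (j, 0))
  have hupper := pairUpper_le_two (x (i, 0) + x (j, 0))
  have hmove := mul_le_of_le_one_left hlen hl.2
  have hmove0 := mul_nonneg hl.1 hlen
  have hdef : pairLength (x (i, 0) + x (j, 0)) =
    pairUpper (x (i, 0) + x (j, 0)) - pairLower (x (i, 0) + x (j, 0)) := rfl
  refine mem_MSet_iff.2 ⟨fun k => ?_, stepM_row_sum hrow _ l, ?_⟩
  · rcases eq_or_ne k i with rfl | hki
    · rw [stepM_apply_fst]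
      constructor <;> linarith
    rcases eq_or_ne k j with rfl | hkj
    · rw [stepM_apply_snd x hij]
      constructor <;> linarith
    · rw [stepM_apply_of_ne x l hki hkj]
      exact hmem k
  · have hsum := sum_add_pair_eq_of_eqOn hij (Finset.mem_univ i) (Finset.mem_univ j)
      fun k hki hkj => stepM_apply_of_ne x l hki hkj 0
    linarith [stepM_add_eq x hij l]

/-- The difference of the first columns of two matrices. -/
def columnDiff (z : NarrowMatrix n × NarrowMatrix n) (k : Fin n) : ℝ := z.1 (k, 0) - z.2 (k, 0)

/-- The invariant of the coupling: both states lie in `M_n` and their first columns agree on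
average on each block of `L`, up to an `ℓ¹` error `D`. -/
def BlockCoupled (L : Fin n → Fin n) (D : ℝ) (z : NarrowMatrix n × NarrowMatrix n) : Prop :=
  (z.1 ∈ MSet n ∧ z.2 ∈ MSet n) ∧ BlockBalanced L D (columnDiff z)

lemma abs_columnDiff_stepM_add_le (z : NarrowMatrix n × NarrowMatrix n) {i j : Fin n} (hij : i ≠ j)
    {l : ℝ} (hl : l ∈ Set.Icc (0 : ℝ) 1) :
    |columnDiff (stepM n z.1 ((i, j), l), stepM n z.2 ((i, j), l)) i| +
        |columnDiff (stepM n z.1 ((i, j), l), stepM n z.2 ((i, j), l)) j| ≤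
      |columnDiff z i| + |columnDiff z j| := by
  simp only [columnDiff, stepM_apply_fst, stepM_apply_snd _ hij, pairLength]
  set s := z.1 (i, 0) + z.1 (j, 0)
  set t := z.2 (i, 0) + z.2 (j, 0)
  have hmix : ∀ u v w : ℝ, u ∈ Set.Icc (0 : ℝ) 1 →
      |(1 - u) * v + u * w| ≤ (1 - u) * |v| + u * |w| := fun u v w hu => by
    refine (abs_add_le _ _).trans_eq ?_
    rw [abs_mul, abs_mul, abs_of_nonneg hu.1, abs_of_nonneg (sub_nonneg.2 hu.2)]
  have hfst := hmix l (pairLower s - pairLower t) (pairUpper s - pairUpper t) hl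
  have hsnd := hmix l (pairUpper s - pairUpper t) (pairLower s - pairLower t) hl
  calc _ = |(1 - l) * (pairLower s - pairLower t) + l * (pairUpper s - pairUpper t)| +
        |(1 - l) * (pairUpper s - pairUpper t) + l * (pairLower s - pairLower t)| := by
        congr 2 <;> ring
    _ ≤ |pairLower s - pairLower t| + |pairUpper s - pairUpper t| := by linarith
    _ = |s - t| := abs_pairLower_sub_add_abs_pairUpper_sub s t
    _ = |(z.1 (i, 0) - z.2 (i, 0)) + (z.1 (j, 0) - z.2 (j, 0))| := by
        congr 1
        ring
    _ ≤ _ := abs_add_le _ _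

lemma BlockCoupled.step_of_eq {L : Fin n → Fin n} {D : ℝ} {z : NarrowMatrix n × NarrowMatrix n}
    (hz : BlockCoupled L D z) {i j : Fin n} (hij : i ≠ j) (hL : L i = L j) {l : ℝ}
    (hl : l ∈ Set.Icc (0 : ℝ) 1) :
    BlockCoupled L D (stepM n z.1 ((i, j), l), stepM n z.2 ((i, j), l)) := by
  refine ⟨⟨stepM_mem_MSet hz.1.1 hij hl, stepM_mem_MSet hz.1.2 hij hl⟩,
    hz.2.of_pair_contraction hij hL (fun k hki hkj => ?_) ?_
      (abs_columnDiff_stepM_add_le z hij hl)⟩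
  · simp only [columnDiff, stepM_apply_of_ne _ _ hki hkj]
  · simp only [columnDiff]
    linarith [stepM_add_eq z.1 hij l, stepM_add_eq z.2 hij l]

/-- The value of `columnDiff` at `i` which balances the block of `i`. -/
def balancingDiff (L : Fin n → Fin n) (i : Fin n) (z : NarrowMatrix n × NarrowMatrix n) : ℝ :=
  -∑ k ∈ (block L (L i)).erase i, columnDiff z k

lemma BlockCoupled.step_of_ne {L : Fin n → Fin n} {D : ℝ} {z : NarrowMatrix n × NarrowMatrix n}
    {i j : Fin n} (hz : BlockCoupled (mergeLabels L (i, j)) D z) (hL : L i ≠ L j) {l l' : ℝ}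
    (hl : l ∈ Set.Icc (0 : ℝ) 1) (hl' : l' ∈ Set.Icc (0 : ℝ) 1)
    (hbal : columnDiff (stepM n z.1 ((i, j), l), stepM n z.2 ((i, j), l')) i =
      balancingDiff L i z) :
    BlockCoupled L D (stepM n z.1 ((i, j), l), stepM n z.2 ((i, j), l')) := by
  have hij : i ≠ j := fun hij => hL (congrArg L hij)
  have hother : ∀ k, k ≠ i → k ≠ j →
      columnDiff (stepM n z.1 ((i, j), l), stepM n z.2 ((i, j), l')) k = columnDiff z k :=
    fun k hki hkj => by simp only [columnDiff, stepM_apply_of_ne _ _ hki hkj]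
  refine ⟨⟨stepM_mem_MSet hz.1.1 hij hl, stepM_mem_MSet hz.1.2 hij hl'⟩,
    hz.2.of_mergeLabels hL hother ?_ ?_⟩
  · simp only [columnDiff]
    linarith [stepM_add_eq z.1 hij l, stepM_add_eq z.2 hij l']
  · rw [← Finset.add_sum_erase _ _ (by simp : i ∈ block L (L i)), hbal,
      balancingDiff, neg_add_eq_zero]
    refine Finset.sum_congr rfl fun k hk => (hother k (Finset.ne_of_mem_erase hk) ?_).symm
    rintro rfl
    exact hL (mem_block.1 (Finset.mem_of_mem_erase hk)).symm

lemma BlockCoupled.sum_abs_le {L : Fin n → Fin n} {D : ℝ} {z : NarrowMatrix n × NarrowMatrix n}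
    {i j : Fin n} (hz : BlockCoupled (mergeLabels L (i, j)) D z) (hL : L i ≠ L j) :
    |columnDiff z i| + |columnDiff z j| +
      ∑ k ∈ (block L (L i)).erase i, |columnDiff z k| ≤ D := by
  have hi : i ∈ block L (L i) := by simp
  have hj : j ∈ block L (L j) := by simp
  have hD := (hz.2 (L j)).2
  rw [block_mergeLabels, Finset.sum_union (disjoint_block L hL),
    ← Finset.add_sum_erase _ _ hi] at hD
  linarith [Finset.single_le_sum (fun k _ => abs_nonneg (columnDiff z k)) hj]

lemma BlockCoupled.abs_balancingDiff_le {L : Fin n → Fin n} {D : ℝ}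
    {z : NarrowMatrix n × NarrowMatrix n} {i j : Fin n}
    (hz : BlockCoupled (mergeLabels L (i, j)) D z) (hL : L i ≠ L j) :
    |balancingDiff L i z| ≤ D := by
  rw [balancingDiff, abs_neg]
  refine (Finset.abs_sum_le_sum_abs _ _).trans ?_
  linarith [hz.sum_abs_le hL, abs_nonneg (columnDiff z i), abs_nonneg (columnDiff z j)]

lemma BlockCoupled.abs_pair_sum_sub_le {L : Fin n → Fin n} {D : ℝ}
    {z : NarrowMatrix n × NarrowMatrix n} {i j : Fin n}
    (hz : BlockCoupled (mergeLabels L (i, j)) D z) (hL : L i ≠ L j) :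
    |z.1 (i, 0) + z.1 (j, 0) - (z.2 (i, 0) + z.2 (j, 0))| ≤ D := by
  have hsum : z.1 (i, 0) + z.1 (j, 0) - (z.2 (i, 0) + z.2 (j, 0)) =
      columnDiff z i + columnDiff z j := by
    simp only [columnDiff]
    ring
  rw [hsum]
  linarith [hz.sum_abs_le hL, abs_add_le (columnDiff z i) (columnDiff z j),
    Finset.sum_nonneg fun k (_ : k ∈ (block L (L i)).erase i) =>
      abs_nonneg (columnDiff z k)]

lemma BlockCoupled.of_sum_abs_le {L : Fin n → Fin n} (hL : ∀ k k', L k = L k') {D : ℝ}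
    {z : NarrowMatrix n × NarrowMatrix n} (hz : z.1 ∈ MSet n ∧ z.2 ∈ MSet n)
    (hD : ∑ q : Fin n × Fin 2, |z.1 q - z.2 q| ≤ D) : BlockCoupled L D z := by
  refine ⟨hz, .of_subsingleton_range hL ?_ (le_trans ?_ hD)⟩
  · simp only [columnDiff, Finset.sum_sub_distrib, hz.1.2.2 0, hz.2.2.2 0, sub_self]
  · rw [Fintype.sum_prod_type]
    refine Finset.sum_le_sum fun k _ => ?_
    rw [Fin.sum_univ_two]
    exact le_add_of_nonneg_right (abs_nonneg _)

lemma BlockCoupled.eq_of_id {D : ℝ} {z : NarrowMatrix n × NarrowMatrix n}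
    (hz : BlockCoupled id D z) : z.1 = z.2 :=
  eq_of_fst_col_eq hz.1.1.2.1 hz.1.2.2.1 fun k =>
    sub_eq_zero.1 (hz.2.eq_zero_of_injective Function.injective_id k)

end Step

section Stationarity

section Lines

variable {E : Type*} [AddCommGroup E] [Module ℝ E]

/-- The length, in units of `v`, of the intersection of `K` with the line through `y` in
direction `v`. -/
def chordLength (K : Set E) (v y : E) : ENNReal := volume {t : ℝ | y + t • v ∈ K}

lemma chordLength_add_smul (K : Set E) (v y : E) (s : ℝ) :
    chordLength K v (y + s • v) = chordLength K v y := by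
  simp only [chordLength, add_assoc, ← add_smul]
  exact measure_preimage_add volume s {t : ℝ | y + t • v ∈ K}

variable [MeasurableSpace E] [MeasurableAdd₂ E] [MeasurableSMul ℝ E]

lemma measurable_chordLength {K : Set E} (hK : MeasurableSet K) (v : E) :
    Measurable (chordLength K v) := by
  have hline : Measurable fun p : E × ℝ => p.1 + p.2 • v := by fun_prop
  exact measurable_measure_prodMk_left (hline hK)

/-- Moving along lines in a fixed direction inside `K` is reversible for a translation invariant
measure. -/
lemma lintegral_lintegral_line_comm (μ : Measure E) [μ.IsAddRightInvariant] {K : Set E}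
    (hK : MeasurableSet K) [SFinite (μ.restrict K)] (v : E) {f g : E → ENNReal}
    (hf : Measurable f) (hg : Measurable g) :
    ∫⁻ y in K, (∫⁻ t : ℝ, f y * K.indicator g (y + t • v)) ∂μ =
      ∫⁻ y in K, (∫⁻ t : ℝ, g y * K.indicator f (y + t • v)) ∂μ := by
  have hline : Measurable fun p : E × ℝ => p.1 + p.2 • v := by fun_prop
  have hmeas : ∀ {f g : E → ENNReal}, Measurable f → Measurable g →
      Measurable fun p : E × ℝ => f p.1 * K.indicator g (p.1 + p.2 • v) := fun hf hg =>
    (hf.comp measurable_fst).mul ((hg.indicator hK).comp hline)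
  have hshift : ∀ t : ℝ, ∫⁻ y in K, f y * K.indicator g (y + t • v) ∂μ =
      ∫⁻ y in K, g y * K.indicator f (y + -t • v) ∂μ := fun t => by
    have hind : ∀ f g : E → ENNReal, ∀ t : ℝ, ∫⁻ y in K, f y * K.indicator g (y + t • v) ∂μ =
        ∫⁻ y, K.indicator f y * K.indicator g (y + t • v) ∂μ := fun f g t => by
      rw [← lintegral_indicator hK]
      simp only [Set.indicator_mul_left]
    rw [hind, hind]
    refine Eq.trans (lintegral_congr fun y => ?_) (lintegral_add_right_eq_self (μ := μ) _ (t • v))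
    rw [neg_smul, add_neg_cancel_right, mul_comm]
  rw [lintegral_lintegral_swap (hmeas hf hg).aemeasurable, lintegral_congr hshift,
    lintegral_neg_eq_self (μ := volume)
      (fun t : ℝ => ∫⁻ y in K, g y * K.indicator f (y + t • v) ∂μ)]
  exact (lintegral_lintegral_swap (hmeas hg hf).aemeasurable).symm

lemma setLIntegral_chord_average (μ : Measure E) [μ.IsAddRightInvariant] {K : Set E}
    (hK : MeasurableSet K) [SFinite (μ.restrict K)] {v : E}
    (hfin : ∀ y ∈ K, chordLength K v y ≠ ⊤) {S : Set E} (hS : MeasurableSet S) :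
    ∫⁻ y in K, (chordLength K v y)⁻¹ * volume {t : ℝ | y + t • v ∈ S ∩ K} ∂μ =
      μ.restrict K (S ∩ {y | chordLength K v y ≠ 0}) := by
  have hℓ := measurable_chordLength hK v
  have hline : ∀ y : E, Measurable fun t : ℝ => y + t • v := fun y => by fun_prop
  have hcomm := lintegral_lintegral_line_comm μ hK v hℓ.inv (measurable_one.indicator hS)
  have hleft : ∀ y, ∫⁻ t : ℝ, (chordLength K v y)⁻¹ * K.indicator (S.indicator 1) (y + t • v) =
      (chordLength K v y)⁻¹ * volume {t : ℝ | y + t • v ∈ S ∩ K} := fun y => by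
    have hSK := (measurable_one (α := ENNReal)).indicator (hS.inter hK)
    rw [Set.indicator_indicator, Set.inter_comm K S]
    refine (lintegral_const_mul _ (hSK.comp (hline y))).trans ?_
    congr 1
    exact lintegral_indicator_one ((hline y) (hS.inter hK))
  have hright : ∀ y ∈ K, ∫⁻ t : ℝ, S.indicator 1 y *
      K.indicator (chordLength K v)⁻¹ (y + t • v) =
      (S ∩ {y | chordLength K v y ≠ 0}).indicator 1 y := fun y hy => by
    have hconst : ∀ t : ℝ, K.indicator (chordLength K v)⁻¹ (y + t • v) =
        (chordLength K v y)⁻¹ * {t : ℝ | y + t • v ∈ K}.indicator 1 t := fun t => by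
      by_cases ht : y + t • v ∈ K <;> simp [ht, chordLength_add_smul]
    have hchord : ∫⁻ t : ℝ, {t : ℝ | y + t • v ∈ K}.indicator 1 t = chordLength K v y :=
      lintegral_indicator_one ((hline y) hK)
    have hone : Measurable ({t : ℝ | y + t • v ∈ K}.indicator (1 : ℝ → ENNReal)) :=
      measurable_one.indicator ((hline y) hK)
    simp_rw [hconst]
    rw [lintegral_const_mul _ (hone.const_mul _), lintegral_const_mul _ hone, hchord]
    rcases eq_or_ne (chordLength K v y) 0 with h0 | h0
    · simp [h0]
    · rw [ENNReal.inv_mul_cancel h0 (hfin y hy), mul_one]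
      by_cases hyS : y ∈ S <;> simp [hyS, h0]
  refine ((setLIntegral_congr_fun hK fun y _ => (hleft y).symm).trans hcomm).trans ?_
  rw [setLIntegral_congr_fun hK hright]
  exact lintegral_indicator_one (hS.inter (hℓ (measurableSet_singleton 0).compl))

end Lines

variable {n : ℕ}

lemma measurable_stepM (e : Fin n × Fin n) :
    Measurable fun p : NarrowMatrix n × ℝ => stepM n p.1 (e, p.2) := by
  refine measurable_pi_iff.2 fun q => ?_
  have hd : MeasurableSet {p : NarrowMatrix n × ℝ | 0 ≤ 2 - p.1 (e.1, 0) - p.1 (e.2, 0)} :=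
    measurableSet_le measurable_const (by fun_prop)
  simp only [stepM]
  split_ifs <;> first | exact Measurable.ite hd (by fun_prop) (by fun_prop) | fun_prop

lemma measurableSet_MSet : MeasurableSet (MSet n) := by
  have hrow : MeasurableSet {x : NarrowMatrix n | ∀ i, x (i, 0) + x (i, 1) = 2} := by
    simp only [Set.ofPred_forall]
    exact .iInter fun i => measurableSet_eq_fun (by fun_prop) (by fun_prop)
  have hcol : MeasurableSet {x : NarrowMatrix n | ∀ j, ∑ i, x (i, j) = n} := by
    simp only [Set.ofPred_forall]
    exact .iInter fun j => measurableSet_eq_fun (by fun_prop) (by fun_prop)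
  have hpos : MeasurableSet {x : NarrowMatrix n | ∀ p, 0 ≤ x p} := by
    simp only [Set.ofPred_forall]
    exact .iInter fun p => measurableSet_le measurable_const (by fun_prop)
  exact hpos.inter (hrow.inter hcol)

/-- The direction in which the Gibbs sampler moves when it updates the rows `i` and `j`. -/
def pairDirection (i j : Fin n) : NarrowMatrix n :=
  fun p => (Pi.single i 1 - Pi.single j 1 : Fin n → ℝ) p.1 * ![1, -1] p.2

lemma add_smul_pairDirection_row_sum {y : NarrowMatrix n} (hy : ∀ k, y (k, 0) + y (k, 1) = 2)
    (i j : Fin n) (t : ℝ) (k : Fin n) :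
    (y + t • pairDirection i j) (k, 0) + (y + t • pairDirection i j) (k, 1) = 2 := by
  simp only [pairDirection, Pi.add_apply, Pi.smul_apply, smul_eq_mul, Matrix.cons_val_zero,
    Matrix.cons_val_one]
  linarith [hy k]

lemma add_smul_pairDirection_mem_MSet_iff {i j : Fin n} (hij : i ≠ j) {y : NarrowMatrix n}
    (hy : y ∈ MSet n) (t : ℝ) : y + t • pairDirection i j ∈ MSet n ↔
      t ∈ Set.Icc (pairLower (y (i, 0) + y (j, 0)) - y (i, 0))
        (pairUpper (y (i, 0) + y (j, 0)) - y (i, 0)) := by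
  obtain ⟨hmem, hrow, hcol⟩ := mem_MSet_iff.1 hy
  have hi : (y + t • pairDirection i j) (i, 0) = y (i, 0) + t := by simp [pairDirection, hij]
  have hj : (y + t • pairDirection i j) (j, 0) = y (j, 0) - t := by
    simp [pairDirection, hij.symm, sub_eq_add_neg]
  have hother : ∀ k, k ≠ i → k ≠ j → (y + t • pairDirection i j) (k, 0) = y (k, 0) :=
    fun k hki hkj => by simp [pairDirection, hki, hkj]
  simp only [Set.mem_Icc, pairLower, pairUpper, sub_le_iff_le_add, le_sub_iff_add_le, max_le_iff,
    le_min_iff]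
  constructor
  · intro h
    have hmem' := (mem_MSet_iff.1 h).1
    have h1 := hmem' i
    have h2 := hmem' j
    rw [hi, Set.mem_Icc] at h1
    rw [hj, Set.mem_Icc] at h2
    refine ⟨⟨?_, ?_⟩, ?_, ?_⟩ <;> linarith
  · rintro ⟨⟨h1, h2⟩, h3, h4⟩
    refine mem_MSet_iff.2 ⟨fun k => ?_, add_smul_pairDirection_row_sum hrow i j t, ?_⟩
    · rcases eq_or_ne k i with rfl | hki
      · rw [hi]
        constructor <;> linarith
      rcases eq_or_ne k j with rfl | hkj
      · rw [hj]
        constructor <;> linarith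
      · rw [hother k hki hkj]
        exact hmem k
    · have hsum := sum_add_pair_eq_of_eqOn hij (Finset.mem_univ i) (Finset.mem_univ j) hother
      linarith

lemma stepM_eq_add_smul {i j : Fin n} (hij : i ≠ j) {y : NarrowMatrix n} (hy : y ∈ MSet n)
    (l : ℝ) : stepM n y ((i, j), l) =
      y + (pairLower (y (i, 0) + y (j, 0)) - y (i, 0) + pairLength (y (i, 0) + y (j, 0)) * l) •
        pairDirection i j := by
  refine eq_of_fst_col_eq (stepM_row_sum hy.2.1 _ l) (add_smul_pairDirection_row_sum hy.2.1 i j _)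
    fun k => ?_
  simp only [pairDirection, Pi.add_apply, Pi.smul_apply, Pi.sub_apply, smul_eq_mul,
    Matrix.cons_val_zero, mul_one]
  rcases eq_or_ne k i with rfl | hki
  · rw [stepM_apply_fst, Pi.single_eq_same, Pi.single_eq_of_ne hij]
    ring
  rcases eq_or_ne k j with rfl | hkj
  · rw [stepM_apply_snd y hij, Pi.single_eq_same, Pi.single_eq_of_ne hij.symm]
    linarith [pairLower_add_pairUpper (y (i, 0) + y (k, 0))]
  · rw [stepM_apply_of_ne y l hki hkj, Pi.single_eq_of_ne hki, Pi.single_eq_of_ne hkj]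
    ring

lemma chordLength_MSet {i j : Fin n} (hij : i ≠ j) {y : NarrowMatrix n} (hy : y ∈ MSet n) :
    chordLength (MSet n) (pairDirection i j) y =
      ENNReal.ofReal (pairLength (y (i, 0) + y (j, 0))) := by
  simp only [chordLength, add_smul_pairDirection_mem_MSet_iff hij hy, Set.ofPred_mem_eq,
    Real.volume_Icc, sub_sub_sub_cancel_right, pairLength]

lemma chordLength_mul_unitUniform_stepM_mem {i j : Fin n} (hij : i ≠ j) {y : NarrowMatrix n}
    (hy : y ∈ MSet n) {S : Set (NarrowMatrix n)} (hS : MeasurableSet S) :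
    chordLength (MSet n) (pairDirection i j) y * unitUniform {l | stepM n y ((i, j), l) ∈ S} =
      volume {t : ℝ | y + t • pairDirection i j ∈ S ∩ MSet n} := by
  obtain ⟨hs0, hs4⟩ := pair_sum_mem_Icc hy i j
  have hline : Measurable fun t : ℝ => y + t • pairDirection i j := by fun_prop
  have hset : MeasurableSet {t : ℝ | y + t • pairDirection i j ∈ S} := hline hS
  have haffine := congrArg (fun μ => μ {t : ℝ | y + t • pairDirection i j ∈ S}) <|
    ofReal_smul_map_affine_unitUniform (pairLength_nonneg hs0 hs4)
      (pairLower (y (i, 0) + y (j, 0)) - y (i, 0))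
  have hend : pairLower (y (i, 0) + y (j, 0)) - y (i, 0) + pairLength (y (i, 0) + y (j, 0)) =
      pairUpper (y (i, 0) + y (j, 0)) - y (i, 0) := by
    rw [pairLength]
    ring
  simp only [Measure.smul_apply, smul_eq_mul] at haffine
  rw [Measure.map_apply (by fun_prop) hset, Measure.restrict_apply hset, hend] at haffine
  simp only [stepM_eq_add_smul hij hy, chordLength_MSet hij hy]
  refine haffine.trans (congrArg volume ?_)
  ext t
  exact and_congr_right fun _ => (add_smul_pairDirection_mem_MSet_iff hij hy t).symm

lemma stepM_eq_self_of_chordLength_eq_zero {i j : Fin n} (hij : i ≠ j) {y : NarrowMatrix n}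
    (hy : y ∈ MSet n) (h : chordLength (MSet n) (pairDirection i j) y = 0) (l : ℝ) :
    stepM n y ((i, j), l) = y := by
  have hmem := (add_smul_pairDirection_mem_MSet_iff hij hy 0).1 (by simpa using hy)
  rw [chordLength_MSet hij hy, ENNReal.ofReal_eq_zero, pairLength] at h
  have hlower : pairLower (y (i, 0) + y (j, 0)) - y (i, 0) = 0 := by linarith [hmem.1, hmem.2]
  have hlength : pairLength (y (i, 0) + y (j, 0)) = 0 := by
    rw [pairLength]
    linarith [hmem.1, hmem.2]
  rw [stepM_eq_add_smul hij hy, hlower, hlength, zero_mul, add_zero, zero_smul, add_zero]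

lemma setLIntegral_unitUniform_stepM_mem (μ : Measure (NarrowMatrix n)) [μ.IsAddRightInvariant]
    [SFinite (μ.restrict (MSet n))] {i j : Fin n} (hij : i ≠ j) {S : Set (NarrowMatrix n)}
    (hS : MeasurableSet S) :
    ∫⁻ y in MSet n, unitUniform {l | stepM n y ((i, j), l) ∈ S} ∂μ = μ.restrict (MSet n) S := by
  set ℓ := chordLength (MSet n) (pairDirection i j)
  have hfin : ∀ y ∈ MSet n, ℓ y ≠ ⊤ := fun y hy =>
    (chordLength_MSet hij hy).trans_ne ENNReal.ofReal_ne_top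
  have hnull : MeasurableSet {y | ℓ y = 0} :=
    measurable_chordLength measurableSet_MSet _ (measurableSet_singleton 0)
  have hsplit : ∀ y ∈ MSet n, unitUniform {l | stepM n y ((i, j), l) ∈ S} =
      (ℓ y)⁻¹ * volume {t : ℝ | y + t • pairDirection i j ∈ S ∩ MSet n} +
        (S ∩ {y | ℓ y = 0}).indicator 1 y := fun y hy => by
    rw [← chordLength_mul_unitUniform_stepM_mem hij hy hS]
    change _ = (ℓ y)⁻¹ * (ℓ y * _) + _
    by_cases h0 : ℓ y = 0
    · simp_rw [stepM_eq_self_of_chordLength_eq_zero hij hy h0]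
      by_cases hyS : y ∈ S <;> simp [h0, hyS]
    · rw [← mul_assoc, ENNReal.inv_mul_cancel h0 (hfin y hy)]
      simp [h0]
  rw [setLIntegral_congr_fun measurableSet_MSet hsplit,
    lintegral_add_right _ (measurable_one.indicator (hS.inter hnull)),
    setLIntegral_chord_average μ measurableSet_MSet hfin hS,
    lintegral_indicator_one (hS.inter hnull), add_comm]
  exact measure_inter_add_sdiff S hnull

lemma UM_map_stepM [IsProbabilityMeasure (UM n)] {i j : Fin n} (hij : i ≠ j) :
    ((UM n).prod unitUniform).map (fun p => stepM n p.1 ((i, j), p.2)) = UM n := by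
  have hfin : IsFiniteMeasure ((μH[(n : ℝ) - 1]).restrict (MSet n)) := by
    refine ⟨lt_top_iff_ne_top.2 fun htop => ?_⟩
    have huniv := measure_univ (μ := UM n)
    rw [Measure.restrict_apply_univ] at htop
    simp [UM, htop] at huniv
  have hmeas := measurable_stepM (i, j)
  ext S hS
  rw [Measure.map_apply hmeas hS, Measure.prod_apply (hmeas hS)]
  change ∫⁻ y, unitUniform {l | stepM n y ((i, j), l) ∈ S} ∂(UM n) = UM n S
  rw [UM, lintegral_smul_measure, setLIntegral_unitUniform_stepM_mem _ hij hS, Measure.smul_apply]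

lemma ae_UM_mem_MSet : ∀ᵐ y ∂UM n, y ∈ MSet n :=
  Measure.ae_smul_measure (ae_restrict_mem measurableSet_MSet) _

end Stationarity

section Anticoncentration

variable {n : ℕ}

lemma exists_pair_sum_mem_Icc_one_three (hn : 2 ≤ n) {y : NarrowMatrix n} (hy : y ∈ MSet n)
    (i : Fin n) : ∃ k, i ≠ k ∧ y (i, 0) + y (k, 0) ∈ Set.Icc 1 3 := by
  obtain ⟨hmem, -, hcol⟩ := mem_MSet_iff.1 hy
  have : Nontrivial (Fin n) := Fin.nontrivial_iff_two_le.2 hn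
  have hne : (Finset.univ.erase i).Nonempty := Finset.univ_nontrivial.erase_nonempty
  rw [← Finset.add_sum_erase _ _ (Finset.mem_univ i)] at hcol
  have hcard : ∑ _k ∈ Finset.univ.erase i, (1 : ℝ) = n - 1 := by
    rw [Finset.sum_const, Finset.card_erase_of_mem (Finset.mem_univ i), Finset.card_univ,
      Fintype.card_fin, nsmul_one, Nat.cast_pred (by lia)]
  rcases le_total (y (i, 0)) 1 with h | h
  · obtain ⟨k, hk, h1⟩ := Finset.exists_le_of_sum_le hne (f := fun _ => (1 : ℝ))
      (g := fun k => y (k, 0)) (by linarith)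
    exact ⟨k, (Finset.ne_of_mem_erase hk).symm, by linarith [(hmem i).1], by linarith [(hmem k).2]⟩
  · obtain ⟨k, hk, h1⟩ := Finset.exists_le_of_sum_le hne (f := fun k => y (k, 0))
      (g := fun _ => (1 : ℝ)) (by linarith)
    exact ⟨k, (Finset.ne_of_mem_erase hk).symm, by linarith [(hmem k).1], by linarith [(hmem i).2]⟩

lemma unitUniform_stepM_notMem_Ioo_le {y : NarrowMatrix n} {i k : Fin n}
    (h : y (i, 0) + y (k, 0) ∈ Set.Icc 1 3) (r : ℝ) :
    unitUniform {l | stepM n y ((i, k), l) (i, 0) ∉ Set.Ioo r (2 - r)} ≤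
      2 * ENNReal.ofReal r := by
  have hlen : 1 ≤ pairLength (y (i, 0) + y (k, 0)) := by
    rcases le_total (y (i, 0) + y (k, 0)) 2 with h2 | h2
    · exact h.1.trans_eq (pairLength_eq_self h2).symm
    · rw [pairLength_eq_four_sub h2]
      linarith [h.2]
  have hlower := pairLower_nonneg (y (i, 0) + y (k, 0))
  have hupper : pairLower (y (i, 0) + y (k, 0)) + pairLength (y (i, 0) + y (k, 0)) ≤ 2 :=
    (add_sub_cancel _ _).trans_le (pairUpper_le_two _)
  calc unitUniform {l | stepM n y ((i, k), l) (i, 0) ∉ Set.Ioo r (2 - r)} ≤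
      unitUniform (Set.Iic r ∪ Set.Ici (1 - r)) := by
        refine measure_mono_ae ?_
        filter_upwards [ae_unitUniform_mem_Icc] with l hl hstep
        change ¬(r < _ ∧ _ < 2 - r) at hstep
        rw [stepM_apply_fst] at hstep
        by_contra hout
        obtain ⟨hr, hr'⟩ := not_or.1 hout
        rw [Set.mem_Iic, not_le] at hr
        rw [Set.mem_Ici, not_le] at hr'
        refine hstep ⟨?_, ?_⟩
        · nlinarith [hl.1]
        · nlinarith [hl.2]
    _ ≤ ENNReal.ofReal r + ENNReal.ofReal (1 - (1 - r)) :=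
        (measure_union_le _ _).trans (add_le_add (unitUniform_Iic_le r) (unitUniform_Ici_le _))
    _ = 2 * ENNReal.ofReal r := by rw [sub_sub_cancel, two_mul]

lemma UM_pair_notMem_Ioo_le [IsProbabilityMeasure (UM n)] {i k : Fin n} (hik : i ≠ k) (r : ℝ) :
    UM n {y | y (i, 0) + y (k, 0) ∈ Set.Icc 1 3 ∧ y (i, 0) ∉ Set.Ioo r (2 - r)} ≤
      2 * ENNReal.ofReal r := by
  set S := {y : NarrowMatrix n | y (i, 0) + y (k, 0) ∈ Set.Icc 1 3 ∧ y (i, 0) ∉ Set.Ioo r (2 - r)}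
  have hS : MeasurableSet S :=
    (measurableSet_Icc.preimage (by fun_prop : Measurable fun y : NarrowMatrix n =>
      y (i, 0) + y (k, 0))).inter (measurableSet_Ioo.preimage (by fun_prop : Measurable
        fun y : NarrowMatrix n => y (i, 0))).compl
  have hmeas := measurable_stepM (i, k)
  calc UM n S = ∫⁻ y, unitUniform {l | stepM n y ((i, k), l) ∈ S} ∂UM n := by
        rw [← UM_map_stepM hik, Measure.map_apply hmeas hS, Measure.prod_apply (hmeas hS),
          UM_map_stepM hik]
        rfl
    _ ≤ ∫⁻ _, 2 * ENNReal.ofReal r ∂UM n := by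
        refine lintegral_mono fun y => ?_
        by_cases hy : y (i, 0) + y (k, 0) ∈ Set.Icc 1 3
        · exact (measure_mono fun l hl => hl.2).trans (unitUniform_stepM_notMem_Ioo_le hy r)
        · have hempty : {l | stepM n y ((i, k), l) ∈ S} = ∅ :=
            Set.eq_empty_of_forall_notMem fun l hl => hy (stepM_add_eq y hik l ▸ hl.1)
          rw [hempty, measure_empty]
          exact zero_le
    _ = 2 * ENNReal.ofReal r := by rw [lintegral_const, measure_univ, mul_one]

lemma UM_pairLength_lt_le [IsProbabilityMeasure (UM n)] (hn : 2 ≤ n) (i j : Fin n) (r : ℝ) :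
    UM n {y | pairLength (y (i, 0) + y (j, 0)) < r} ≤ ENNReal.ofReal (2 * n * r) := by
  calc UM n {y | pairLength (y (i, 0) + y (j, 0)) < r} ≤
      UM n (⋃ k ∈ Finset.univ.filter (i ≠ ·),
        {y | y (i, 0) + y (k, 0) ∈ Set.Icc 1 3 ∧ y (i, 0) ∉ Set.Ioo r (2 - r)}) := by
        refine measure_mono_ae ?_
        filter_upwards [ae_UM_mem_MSet] with y hy hlen
        obtain ⟨k, hik, hk⟩ := exists_pair_sum_mem_Icc_one_three hn hy i
        refine Set.mem_biUnion (Finset.mem_filter_univ k |>.2 hik) ⟨hk, fun hmem => ?_⟩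
        have hj := (mem_MSet_iff.1 hy).1 j
        change pairLength _ < r at hlen
        rcases le_total (y (i, 0) + y (j, 0)) 2 with h2 | h2
        · rw [pairLength_eq_self h2] at hlen
          linarith [hj.1, hmem.1]
        · rw [pairLength_eq_four_sub h2] at hlen
          linarith [hj.2, hmem.2]
    _ ≤ ∑ k with i ≠ k, 2 * ENNReal.ofReal r :=
        (measure_biUnion_finset_le _ _).trans (Finset.sum_le_sum fun k hk =>
          UM_pair_notMem_Ioo_le ((Finset.mem_filter_univ k).1 hk) r)
    _ ≤ n * (2 * ENNReal.ofReal r) := by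
        rw [Finset.sum_const, nsmul_eq_mul]
        gcongr
        exact (Finset.card_filter_le _ _).trans_eq (Finset.card_fin n)
    _ = ENNReal.ofReal (2 * n * r) := by
        rw [ENNReal.ofReal_mul (by positivity), ENNReal.ofReal_mul zero_le_two,
          ENNReal.ofReal_natCast, ENNReal.ofReal_ofNat]
        ring

end Anticoncentration

section BlockCounting

variable {ι β : Type*} [Fintype ι] [DecidableEq β]

/-- The number of blocks of the partition encoded by the labelling `L`. -/
def numBlocks (L : ι → β) : ℕ := (Finset.univ.image L).card

lemma numBlocks_pos [Nonempty ι] (L : ι → β) : 0 < numBlocks L :=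
  (Finset.univ_nonempty.image L).card_pos

lemma numBlocks_le_card (L : ι → β) : numBlocks L ≤ Fintype.card ι :=
  Finset.card_image_le

lemma numBlocks_id [DecidableEq ι] : numBlocks (id : ι → ι) = Fintype.card ι := by
  rw [numBlocks, Finset.image_id, Finset.card_univ]

lemma apply_eq_of_numBlocks_le_one {L : ι → β} (h : numBlocks L ≤ 1) (i j : ι) : L i = L j :=
  Finset.card_le_one.1 h _ (Finset.mem_image_of_mem L (Finset.mem_univ i)) _
    (Finset.mem_image_of_mem L (Finset.mem_univ j))

lemma numBlocks_mergeLabels {L : ι → β} {e : ι × ι} (h : L e.1 ≠ L e.2) :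
    numBlocks (mergeLabels L e) + 1 = numBlocks L := by
  have himage : Finset.univ.image (mergeLabels L e) = (Finset.univ.image L).erase (L e.1) := by
    ext b
    simp only [Finset.mem_image, Finset.mem_univ, true_and, Finset.mem_erase, mergeLabels]
    constructor
    · rintro ⟨k, rfl⟩
      split_ifs with hk
      · exact ⟨h.symm, e.2, rfl⟩
      · exact ⟨hk, k, rfl⟩
    · rintro ⟨hb, k, rfl⟩
      exact ⟨k, if_neg hb⟩
  rw [numBlocks, himage]
  exact Finset.card_erase_add_one (Finset.mem_image_of_mem L (Finset.mem_univ _))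

lemma sum_card_block (L : ι → β) :
    ∑ b ∈ Finset.univ.image L, (block L b).card = Fintype.card ι :=
  (Finset.card_eq_sum_card_image L Finset.univ).symm

lemma card_filter_label_eq (L : ι → β) :
    ({e | L e.1 = L e.2} : Finset (ι × ι)).card =
      ∑ b ∈ Finset.univ.image L, (block L b).card ^ 2 := by
  rw [Finset.card_eq_sum_card_fiberwise (f := fun e => L e.1) (t := Finset.univ.image L)
    fun e _ => by simp]
  refine Finset.sum_congr rfl fun b _ => ?_
  rw [sq, ← Finset.card_product]
  congr 1
  ext ⟨i, j⟩
  simp only [Finset.mem_filter, Finset.mem_univ, true_and, Finset.mem_product, mem_block]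
  exact ⟨fun h => ⟨h.2, h.1 ▸ h.2⟩, fun h => ⟨h.1.trans h.2.symm, h.1⟩⟩

/-- Equality holds when all blocks but one are singletons. -/
lemma sum_card_block_sq_le (L : ι → β) :
    ∑ b ∈ Finset.univ.image L, ((block L b).card : ℝ) ^ 2 ≤
      (Fintype.card ι + 1 - numBlocks L) ^ 2 + (numBlocks L - 1) := by
  have hone : ∀ b ∈ Finset.univ.image L, 0 ≤ ((block L b).card : ℝ) - 1 := fun b hb => by
    obtain ⟨k, -, rfl⟩ := Finset.mem_image.1 hb
    exact sub_nonneg.2 (Nat.one_le_cast.2 (Finset.card_pos.2 ⟨k, mem_block.2 rfl⟩))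
  have hcard : ∑ b ∈ Finset.univ.image L, ((block L b).card : ℝ) = Fintype.card ι := by
    exact_mod_cast sum_card_block L
  have hnum : ∑ _b ∈ Finset.univ.image L, (1 : ℝ) = numBlocks L := by
    rw [Finset.sum_const, nsmul_one, numBlocks]
  have hsq := Finset.sum_sq_le_sq_sum_of_nonneg hone
  rw [Finset.sum_sub_distrib, hcard, hnum] at hsq
  have hexpand : ∑ b ∈ Finset.univ.image L, ((block L b).card - 1 : ℝ) ^ 2 =
      ∑ b ∈ Finset.univ.image L, ((block L b).card : ℝ) ^ 2 - 2 * Fintype.card ι + numBlocks L := by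
    simp only [sub_sq, Finset.sum_add_distrib, Finset.sum_sub_distrib, mul_one, one_pow, hnum,
      ← Finset.mul_sum, hcard]
  linarith

end BlockCounting

section MergeProbability

variable {n : ℕ}

lemma two_mul_card_pairsF_filter {P : Fin n → Fin n → Prop} [DecidableRel P]
    (hsymm : ∀ i j, P i j → P j i) (hirrefl : ∀ i, ¬P i i) :
    2 * ((pairsF n).filter fun e => P e.1 e.2).card =
      ({e | P e.1 e.2} : Finset (Fin n × Fin n)).card := by
  have hswap : ({e | P e.1 e.2} : Finset (Fin n × Fin n)).filter (fun e => ¬e.1 < e.2) =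
      ((pairsF n).filter fun e => P e.1 e.2).map (Equiv.prodComm _ _).toEmbedding := by
    ext ⟨i, j⟩
    rw [Finset.mem_map_equiv]
    simp only [pairsF, Finset.mem_filter, Finset.mem_univ, true_and, not_lt,
      Equiv.prodComm_symm, Equiv.prodComm_apply, Prod.swap_prod_mk]
    constructor
    · rintro ⟨hP, hji⟩
      exact ⟨lt_of_le_of_ne hji fun h => hirrefl i (by rwa [h] at hP), hsymm i j hP⟩
    · exact fun ⟨hji, hP⟩ => ⟨hsymm j i hP, hji.le⟩
  rw [← Finset.card_filter_add_card_filter_not (s := {e | P e.1 e.2})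
    (fun e : Fin n × Fin n => e.1 < e.2), hswap, Finset.card_map, Finset.filter_comm, two_mul]
  rfl

lemma two_mul_card_pairsF : (2 * (pairsF n).card : ℝ) = n * (n - 1) := by
  have hne : (pairsF n).filter (fun e => e.1 ≠ e.2) = pairsF n :=
    Finset.filter_true_of_mem fun e he => ((Finset.mem_filter_univ e).1 he).ne
  have hcard := two_mul_card_pairsF_filter (n := n) (P := (· ≠ ·)) (fun _ _ => Ne.symm) (by simp)
  have hoff : ({e | e.1 ≠ e.2} : Finset (Fin n × Fin n)) = Finset.univ.offDiag := by ext; simp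
  rw [hne, hoff, Finset.offDiag_card, Finset.card_fin] at hcard
  have hle : n ≤ n * n := Nat.le_mul_self n
  have hcast : ((2 * (pairsF n).card : ℕ) : ℝ) = n * n - n := by rw [hcard, Nat.cast_sub hle]; simp
  push_cast at hcast
  linarith

lemma card_pairsF_pos (hn : 2 ≤ n) : 0 < (pairsF n).card := by
  have hn' : (2 : ℝ) ≤ n := by exact_mod_cast hn
  have hcard := two_mul_card_pairsF (n := n)
  have : (0 : ℝ) < (pairsF n).card := by nlinarith
  exact_mod_cast this

/-- A lower bound for the probability that a uniformly random pair joins two different blocks of a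
partition of `n` points into `k` blocks. -/
def mergeProb (n : ℕ) (k : ℝ) : ℝ := (k - 1) * (2 * n - k) / (n * (n - 1))

lemma mergeProb_nonneg {k : ℝ} (h1 : 1 ≤ k) (hk : k ≤ n) : 0 ≤ mergeProb n k :=
  div_nonneg (mul_nonneg (by linarith) (by linarith)) (mul_nonneg (by linarith) (by linarith))

lemma mergeProb_mul_card_pairsF_le (hn : 2 ≤ n) {β : Type*} [DecidableEq β] (L : Fin n → β) :
    mergeProb n (numBlocks L) * (pairsF n).card ≤
      ((pairsF n).filter fun e => L e.1 ≠ L e.2).card := by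
  have hn' : (2 : ℝ) ≤ n := by exact_mod_cast hn
  have hpos : (0 : ℝ) < n * (n - 1) := mul_pos (by linarith) (by linarith)
  have hsame := sum_card_block_sq_le L
  have hpairs := two_mul_card_pairsF_filter (P := fun i j => L i ≠ L j) (fun _ _ => Ne.symm)
    (by simp)
  have hsplit := Finset.card_filter_add_card_filter_not
    (s := (Finset.univ : Finset (Fin n × Fin n))) fun e => L e.1 = L e.2
  rw [card_filter_label_eq, ← hpairs, Finset.card_univ, Fintype.card_prod, Fintype.card_fin]
    at hsplit
  have hsplit' : ∑ b ∈ Finset.univ.image L, ((block L b).card : ℝ) ^ 2 +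
      2 * ((pairsF n).filter fun e => L e.1 ≠ L e.2).card = n * n := by exact_mod_cast hsplit
  rw [Fintype.card_fin] at hsame
  rw [mergeProb, div_mul_eq_mul_div, div_le_iff₀ hpos, ← two_mul_card_pairsF]
  nlinarith

end MergeProbability

section UniformSampling

variable {α : Type*} [MeasurableSpace α]

lemma lintegral_unifOn [MeasurableSingletonClass α] (s : Finset α) (f : α → ENNReal) :
    ∫⁻ a, f a ∂unifOn s = (s.card : ENNReal)⁻¹ * ∑ a ∈ s, f a := by
  rw [unifOn, lintegral_smul_measure, lintegral_finsetSum_measure, smul_eq_mul]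
  simp only [lintegral_dirac]

lemma isProbabilityMeasure_unifOn {s : Finset α} (hs : s.Nonempty) :
    IsProbabilityMeasure (unifOn s) := by
  refine ⟨?_⟩
  simp only [unifOn, Measure.smul_apply, Measure.coe_finsetSum, Finset.sum_apply,
    measure_univ, Finset.sum_const, nsmul_one, smul_eq_mul]
  exact ENNReal.inv_mul_cancel (Nat.cast_ne_zero.2 hs.card_ne_zero) (ENNReal.natCast_ne_top _)

lemma ae_unifOn_mem [MeasurableSingletonClass α] (s : Finset α) : ∀ᵐ a ∂unifOn s, a ∈ s := by
  refine Measure.ae_smul_measure ?_ _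
  rw [ae_finsetSum_measure_iff]
  exact fun a ha => (ae_dirac_iff s.measurableSet).2 ha

lemma measurePreserving_fin_cons (μ : Measure α) [SigmaFinite μ] (T : ℕ) :
    MeasurePreserving (fun p : α × (Fin T → α) => (Fin.cons p.1 p.2 : Fin (T + 1) → α))
      (μ.prod (Measure.pi fun _ => μ)) (Measure.pi fun _ => μ) := by
  convert (measurePreserving_piFinSuccAbove (fun _ : Fin (T + 1) => μ) 0).symm using 1
  funext p
  simp [MeasurableEquiv.piFinSuccAbove, Fin.insertNthEquiv]

lemma measurePreserving_fin_head_tail (μ : Measure α) [SigmaFinite μ] (T : ℕ) :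
    MeasurePreserving (fun w : Fin (T + 1) → α => (w 0, Fin.tail w))
      (Measure.pi fun _ => μ) (μ.prod (Measure.pi fun _ => μ)) :=
  measurePreserving_piFinSuccAbove (fun _ : Fin (T + 1) => μ) 0

lemma lintegral_pi_fin_cons (μ : Measure α) [SigmaFinite μ] {T : ℕ}
    {f : (Fin (T + 1) → α) → ENNReal} (hf : Measurable f) :
    ∫⁻ w, f w ∂Measure.pi (fun _ => μ) =
      ∫⁻ w, ∫⁻ x, f (Fin.cons x w) ∂μ ∂Measure.pi fun _ => μ := by
  have hcons := measurePreserving_fin_cons μ T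
  rw [← hcons.lintegral_comp hf]
  exact lintegral_prod_symm _ (hf.comp hcons.measurable).aemeasurable

end UniformSampling

section RandomMerging

variable {n : ℕ}

/-- The eigenfunction with eigenvalue `1 - 2 / n` of the death chain on `{1, …, n}` whose death
probabilities are `mergeProb n`. -/
def blockPotential (n : ℕ) (k : ℝ) : ℝ := (k - 1) * (2 * n - 3) / (2 * n - k - 1)

lemma blockPotential_one : blockPotential n 1 = 0 := by simp [blockPotential]

lemma blockPotential_self (hn : 2 ≤ n) : blockPotential n n = 2 * n - 3 := by
  have hn' : (2 : ℝ) ≤ n := by exact_mod_cast hn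
  rw [blockPotential, div_eq_iff (by linarith)]
  ring

lemma blockPotential_nonneg (hn : 2 ≤ n) {k : ℝ} (h1 : 1 ≤ k) (hk : k ≤ n) :
    0 ≤ blockPotential n k := by
  have hn' : (2 : ℝ) ≤ n := by exact_mod_cast hn
  exact div_nonneg (mul_nonneg (by linarith) (by linarith)) (by linarith)

lemma one_le_blockPotential {k : ℝ} (h2 : 2 ≤ k) (hk : k ≤ n) :
    1 ≤ blockPotential n k := by
  rw [blockPotential, one_le_div (by linarith)]
  nlinarith

lemma blockPotential_sub (hn : 2 ≤ n) {k : ℝ} (hk : k ≤ n) :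
    blockPotential n k - blockPotential n (k - 1) =
      (2 * n - 3) * (2 * n - 2) / ((2 * n - k - 1) * (2 * n - k)) := by
  have hn' : (2 : ℝ) ≤ n := by exact_mod_cast hn
  have h1 : 2 * n - k - 1 ≠ 0 := by linarith
  have h2 : 2 * n - k ≠ 0 := by linarith
  have h3 : 2 * n - (k - 1) - 1 = 2 * n - k := by ring
  rw [blockPotential, blockPotential, h3, div_sub_div _ _ h1 h2]
  ring

lemma one_le_blockPotential_sub {k : ℝ} (h2 : 2 ≤ k) (hk : k ≤ n) :
    1 ≤ blockPotential n k - blockPotential n (k - 1) := by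
  have hn : 2 ≤ n := by exact_mod_cast h2.trans hk
  rw [blockPotential_sub hn hk, one_le_div (mul_pos (by linarith) (by linarith))]
  apply mul_le_mul <;> linarith

lemma mergeProb_mul_blockPotential_sub (hn : 2 ≤ n) {k : ℝ} (hk : k ≤ n) :
    mergeProb n k * (blockPotential n k - blockPotential n (k - 1)) =
      2 / n * blockPotential n k := by
  have hn' : (2 : ℝ) ≤ n := by exact_mod_cast hn
  have h0 : (n : ℝ) - 1 ≠ 0 := by linarith
  have h1 : 2 * n - k - 1 ≠ 0 := by linarith
  have h2 : 2 * n - k ≠ 0 := by linarith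
  rw [blockPotential_sub hn hk, mergeProb, blockPotential]
  field_simp

/-- A family of functions `G t` of the block potential which dominates the indicator of having more
than one block at `t = 0`, and whose value at a partition dominates its mean after one random merge:
`p` and `Δ` stand for the probability of a merge and the resulting decrease of the potential. -/
structure IsMergeSupersolution (n : ℕ) (G : ℕ → ℝ → ℝ) : Prop where
  one_le : ∀ y : ℝ, 1 ≤ y → 1 ≤ G 0 y
  nonneg : ∀ (t : ℕ) (y : ℝ), 0 ≤ y → 0 ≤ G t y
  mono : ∀ t, Monotone (G t)
  step : ∀ (t : ℕ) (y p Δ : ℝ), 0 ≤ y → 0 ≤ p → p ≤ 1 → 1 ≤ Δ → p * Δ = 2 / n * y →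
    G t y - p * (G t y - G t (y - Δ)) ≤ G (t + 1) y

variable {G : ℕ → ℝ → ℝ}

lemma numBlocks_mem_Icc (hn : 2 ≤ n) {β : Type*} [DecidableEq β] (L : Fin n → β) :
    (numBlocks L : ℝ) ∈ Set.Icc (1 : ℝ) n := by
  have : Nonempty (Fin n) := ⟨⟨0, by lia⟩⟩
  have hle := numBlocks_le_card L
  rw [Fintype.card_fin] at hle
  exact ⟨Nat.one_le_cast.2 (numBlocks_pos L), Nat.cast_le.2 hle⟩

lemma IsMergeSupersolution.sum_mergeLabels_le (hG : IsMergeSupersolution n G) (hn : 2 ≤ n)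
    {β : Type*} [DecidableEq β] (L : Fin n → β) (t : ℕ) :
    ∑ e ∈ pairsF n, G t (blockPotential n (numBlocks (mergeLabels L e))) ≤
      (pairsF n).card * G (t + 1) (blockPotential n (numBlocks L)) := by
  have hN : (0 : ℝ) < (pairsF n).card := Nat.cast_pos.2 (card_pairsF_pos hn)
  obtain ⟨hk1, hkn⟩ := numBlocks_mem_Icc hn L
  rcases le_or_gt (numBlocks L) 1 with hk | hk
  · have hstep := hG.step t 0 0 1 le_rfl le_rfl zero_le_one le_rfl (by simp)
    have hk' : (numBlocks L : ℝ) = 1 := le_antisymm (by exact_mod_cast hk) hk1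
    simp only [mergeLabels_of_eq (apply_eq_of_numBlocks_le_one hk _ _), Finset.sum_const,
      nsmul_eq_mul, hk', blockPotential_one]
    rw [zero_mul, sub_zero] at hstep
    gcongr
  set k : ℝ := (numBlocks L : ℝ)
  have hk2 : 2 ≤ k := Nat.ofNat_le_cast.2 hk
  set drop := G t (blockPotential n k) - G t (blockPotential n (k - 1))
  have hdrop : 0 ≤ drop :=
    sub_nonneg.2 (hG.mono t (by linarith [one_le_blockPotential_sub hk2 hkn]))
  have hvalue : ∀ e, G t (blockPotential n (numBlocks (mergeLabels L e))) =
      G t (blockPotential n k) - if L e.1 ≠ L e.2 then drop else 0 := fun e => by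
    split_ifs with he
    · rw [sub_sub_cancel, show k = numBlocks (mergeLabels L e) + 1 by
        simp [k, ← numBlocks_mergeLabels he], add_sub_cancel_right]
    · rw [sub_zero, mergeLabels_of_eq (not_ne_iff.1 he)]
  have hprob := mergeProb_mul_card_pairsF_le hn L
  have hprob_le : mergeProb n k ≤ 1 := by
    refine le_of_mul_le_mul_right (hprob.trans ?_) hN
    rw [one_mul]
    exact_mod_cast Finset.card_filter_le _ _
  have hstep := hG.step t _ _ _ (blockPotential_nonneg hn hk1 hkn) (mergeProb_nonneg hk1 hkn)
    hprob_le (one_le_blockPotential_sub hk2 hkn) (mergeProb_mul_blockPotential_sub hn hkn)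
  rw [sub_sub_cancel] at hstep
  rw [Finset.sum_congr rfl fun e _ => hvalue e, Finset.sum_sub_distrib, Finset.sum_const,
    ← Finset.sum_filter, Finset.sum_const, nsmul_eq_mul, nsmul_eq_mul]
  nlinarith [mul_le_mul_of_nonneg_right hprob hdrop, mul_le_mul_of_nonneg_left hstep hN.le]

lemma IsMergeSupersolution.lintegral_mergeLabels_le (hG : IsMergeSupersolution n G) (hn : 2 ≤ n)
    {β : Type*} [DecidableEq β] (L : Fin n → β) (t : ℕ) :
    ∫⁻ e, ENNReal.ofReal (G t (blockPotential n (numBlocks (mergeLabels L e))))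
        ∂unifOn (pairsF n) ≤
      ENNReal.ofReal (G (t + 1) (blockPotential n (numBlocks L))) := by
  have hnonneg : ∀ e, 0 ≤ G t (blockPotential n (numBlocks (mergeLabels L e))) := fun e =>
    have hmem := numBlocks_mem_Icc hn (mergeLabels L e)
    hG.nonneg t _ (blockPotential_nonneg hn hmem.1 hmem.2)
  have hN : ((pairsF n).card : ENNReal) ≠ 0 := Nat.cast_ne_zero.2 (card_pairsF_pos hn).ne'
  rw [lintegral_unifOn, ← ENNReal.ofReal_sum_of_nonneg fun e _ => hnonneg e, mul_comm,
    ← div_eq_mul_inv, ENNReal.div_le_iff hN (ENNReal.natCast_ne_top _), ← ENNReal.ofReal_natCast,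
    ← ENNReal.ofReal_mul' (Nat.cast_nonneg _), mul_comm]
  exact ENNReal.ofReal_le_ofReal (hG.sum_mergeLabels_le hn L t)

/-- The labelling whose blocks are the connected components of the graph with edges
`e 0, …, e (T - 1)`, built by adding the edges in reverse order. -/
def pathLabels {ι : Type*} [DecidableEq ι] : (T : ℕ) → (Fin T → ι × ι) → ι → ι
  | 0, _ => id
  | T + 1, e => mergeLabels (pathLabels T (Fin.tail e)) (e 0)

lemma IsMergeSupersolution.lintegral_pathLabels_le (hG : IsMergeSupersolution n G) (hn : 2 ≤ n)
    (T s : ℕ) :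
    ∫⁻ e, ENNReal.ofReal (G s (blockPotential n (numBlocks (pathLabels T e))))
        ∂Measure.pi (fun _ => unifOn (pairsF n)) ≤
      ENNReal.ofReal (G (s + T) (2 * n - 3)) := by
  have := isProbabilityMeasure_unifOn (Finset.card_pos.1 (card_pairsF_pos hn))
  induction T generalizing s with
  | zero =>
    rw [lintegral_unique]
    simp [pathLabels, numBlocks_id, blockPotential_self hn]
  | succ T ih =>
    rw [lintegral_pi_fin_cons _ .of_discrete]
    refine (lintegral_mono fun e => hG.lintegral_mergeLabels_le hn (pathLabels T e) s).trans ?_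
    rw [← add_assoc, add_right_comm]
    exact ih (s + 1)

lemma IsMergeSupersolution.measure_one_lt_numBlocks_le (hG : IsMergeSupersolution n G)
    (hn : 2 ≤ n) (T : ℕ) :
    Measure.pi (fun _ => unifOn (pairsF n)) {e | 1 < numBlocks (pathLabels T e)} ≤
      ENNReal.ofReal (G T (2 * n - 3)) := by
  rw [← lintegral_indicator_one .of_discrete]
  refine le_trans (lintegral_mono fun e => ?_)
    ((hG.lintegral_pathLabels_le hn T 0).trans_eq (by rw [zero_add]))
  rw [Set.indicator_apply]
  split_ifs with he
  · exact ENNReal.one_le_ofReal.2 <| hG.one_le _ <|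
      one_le_blockPotential (Nat.ofNat_le_cast.2 he) (numBlocks_mem_Icc hn _).2
  · exact zero_le

end RandomMerging

section Supersolutions

variable {n : ℕ}

lemma isMergeSupersolution_linear (hn : 2 ≤ n) :
    IsMergeSupersolution n fun t y => y * (1 - 2 / n) ^ t := by
  have hn' : (2 : ℝ) ≤ n := by exact_mod_cast hn
  have hbase : 0 ≤ 1 - 2 / (n : ℝ) := sub_nonneg.2 ((div_le_one (by linarith)).2 hn')
  refine ⟨fun y hy => by simpa using hy, fun t y hy => by positivity,
    fun t y z hyz => by gcongr, fun t y p Δ _ _ _ _ hpΔ => le_of_eq ?_⟩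
  rw [pow_succ]
  linear_combination -(1 - 2 / (n : ℝ)) ^ t * hpΔ

lemma one_add_mul_div_one_sub_le_rpow_neg {q Δ : ℝ} (hq0 : 0 ≤ q) (hq1 : q < 1) (hΔ : 1 ≤ Δ) :
    1 + Δ * (q / (1 - q)) ≤ (1 - q) ^ (-Δ) := by
  have hq : 0 < 1 - q := sub_pos.2 hq1
  have hinv : (1 - q)⁻¹ = 1 + q / (1 - q) := by field_simp; ring
  rw [Real.rpow_neg hq.le, ← Real.inv_rpow hq.le, hinv]
  exact one_add_mul_self_le_rpow_one_add (by linarith [div_nonneg hq0 hq.le]) hΔ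

lemma one_add_div_rpow_le {m K y φ : ℝ} (hm : 0 < m) (hy : 0 ≤ y) (hφ : 0 ≤ φ) (hK : φ * y ≤ K) :
    (1 + y / (m + K)) ^ φ ≤ 1 + φ * y / m := by
  have hz : 0 ≤ φ * y := mul_nonneg hφ hy
  have hmK : 0 < m + K := by linarith
  have hlt : φ * y / (m + K) < 1 := (div_lt_one hmK).2 (by linarith)
  calc (1 + y / (m + K)) ^ φ
      ≤ Real.exp (y / (m + K)) ^ φ := by
        gcongr
        linarith [Real.add_one_le_exp (y / (m + K))]
    _ = Real.exp (φ * y / (m + K)) := by rw [← Real.exp_mul]; congr 1; ring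
    _ ≤ 1 / (1 - φ * y / (m + K)) :=
        Real.exp_bound_div_one_sub_of_interval (by positivity) hlt
    _ ≤ 1 + φ * y / m := by
        have hsub : 0 < m + K - φ * y := by linarith
        rw [one_sub_div hmK.ne', one_div_div, ← sub_nonneg]
        have : 1 + φ * y / m - (m + K) / (m + K - φ * y) =
            φ * y * (K - φ * y) / (m * (m + K - φ * y)) := by field_simp; ring
        rw [this]
        exact div_nonneg (mul_nonneg hz (sub_nonneg.2 hK)) (by positivity)

/-- Coupon-collector heuristic for connectivity: the probability that a given unit of the block
potential is still present after `t` merges, if the units were independent. The rate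
`1 / (n / 2 + 45)`, instead of the true `2 / n`, absorbs the error of this approximation, and the
factor `15 / 16` makes `(1 - couponMissProb n 0) ^ y ≤ 1 / 16` for `y ≥ 1`, the level at which
`isMergeSupersolution_coupon` truncates. -/
def couponMissProb (n t : ℕ) : ℝ := 15 / 16 * (1 - 1 / ((n : ℝ) / 2 + 45)) ^ t

lemma couponMissProb_mem_Ioc (n t : ℕ) : couponMissProb n t ∈ Set.Ioc (0 : ℝ) (15 / 16) := by
  have hrate : 1 / ((n : ℝ) / 2 + 45) < 1 :=
    (div_lt_one (by positivity)).2 (by linarith [n.cast_nonneg (α := ℝ)])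
  have hrate0 : 0 < 1 / ((n : ℝ) / 2 + 45) := by positivity
  have hpos : 0 < 1 - 1 / ((n : ℝ) / 2 + 45) := sub_pos.2 hrate
  refine ⟨by rw [couponMissProb]; positivity, ?_⟩
  exact mul_le_of_le_one_right (by norm_num) (pow_le_one₀ hpos.le (by linarith))

lemma one_sub_couponMissProb_succ (n t : ℕ) :
    1 - couponMissProb n (t + 1) = (1 - couponMissProb n t) *
      (1 + couponMissProb n t / (1 - couponMissProb n t) / ((n : ℝ) / 2 + 45)) := by
  have hq : 1 - couponMissProb n t ≠ 0 := by linarith [(couponMissProb_mem_Ioc n t).2]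
  have hsucc : couponMissProb n (t + 1) = couponMissProb n t * (1 - 1 / ((n : ℝ) / 2 + 45)) := by
    rw [couponMissProb, pow_succ, ← mul_assoc, ← couponMissProb]
  rw [hsucc]
  field_simp
  ring

lemma log_sixteen_le : Real.log 16 ≤ 2.7726 := by
  rw [show (16 : ℝ) = 2 ^ 4 by norm_num, Real.log_pow]
  push_cast
  linarith [Real.log_two_lt_d9]

lemma mul_couponMissProb_div_le (hn : 4096 ≤ n) {t : ℕ} {φ : ℝ} (hφ : 0 ≤ φ)
    (hbig : 1 / 16 ≤ (1 - couponMissProb n (t + 1)) ^ φ) :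
    φ * (couponMissProb n t / (1 - couponMissProb n t)) ≤ 45 := by
  have hn' : (4096 : ℝ) ≤ n := by exact_mod_cast hn
  obtain ⟨hq0, hq1⟩ := couponMissProb_mem_Ioc n t
  have hnext := (couponMissProb_mem_Ioc n (t + 1)).2
  have hrate : 1 / ((n : ℝ) / 2 + 45) ≤ 1 / 2093 :=
    one_div_le_one_div_of_le (by norm_num) (by linarith)
  have hexp : (1 - couponMissProb n (t + 1)) ^ φ ≤ Real.exp (-couponMissProb n (t + 1) * φ) := by
    rw [Real.exp_mul]
    gcongr
    · linarith
    · linarith [Real.add_one_le_exp (-couponMissProb n (t + 1))]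
  have hlog : couponMissProb n (t + 1) * φ ≤ 2.7726 := by
    have := (Real.log_le_iff_le_exp (by norm_num)).2 (hbig.trans hexp)
    rw [one_div, Real.log_inv] at this
    linarith [log_sixteen_le]
  have hq : couponMissProb n t * φ ≤ 2.774 := by
    have hsucc : couponMissProb n (t + 1) = (1 - 1 / ((n : ℝ) / 2 + 45)) * couponMissProb n t := by
      rw [couponMissProb, couponMissProb, pow_succ]
      ring
    have := mul_le_mul_of_nonneg_right hrate (mul_nonneg hq0.le hφ)
    rw [hsucc] at hlog
    linarith
  rw [← mul_div_assoc, div_le_iff₀ (by linarith)]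
  linarith

lemma one_sub_couponMissProb_rpow_le (hn : 4096 ≤ n) {t : ℕ} {φ p Δ : ℝ} (hφ : 0 ≤ φ) (hp : 0 ≤ p)
    (hΔ : 1 ≤ Δ) (hpΔ : p * Δ = 2 / n * φ) (hbig : 1 / 16 ≤ (1 - couponMissProb n (t + 1)) ^ φ) :
    (1 - couponMissProb n (t + 1)) ^ φ ≤ (1 - p) * (1 - couponMissProb n t) ^ φ +
      p * (1 - couponMissProb n t) ^ (φ - Δ) := by
  obtain ⟨hq0, hq1⟩ := couponMissProb_mem_Ioc n t
  have hK := mul_couponMissProb_div_le hn hφ hbig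
  rw [one_sub_couponMissProb_succ]
  set q := couponMissProb n t
  set y := q / (1 - q)
  have hb : 0 < 1 - q := by linarith
  have hy : 0 ≤ y := by positivity
  have hmerge : (1 + y / ((n : ℝ) / 2 + 45)) ^ φ ≤ 1 + p * ((1 - q) ^ (-Δ) - 1) :=
    calc (1 + y / ((n : ℝ) / 2 + 45)) ^ φ
        ≤ 1 + φ * y / ((n : ℝ) / 2) := one_add_div_rpow_le (by positivity) hy hφ hK
      _ = 1 + p * (1 + Δ * y - 1) := by
          have : φ * y / ((n : ℝ) / 2) = 2 / n * φ * y := by field_simp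
          rw [this, ← hpΔ]
          ring
      _ ≤ 1 + p * ((1 - q) ^ (-Δ) - 1) := by
          gcongr
          exact one_add_mul_div_one_sub_le_rpow_neg hq0.le (by linarith) hΔ
  calc ((1 - q) * (1 + y / ((n : ℝ) / 2 + 45))) ^ φ
      = (1 - q) ^ φ * (1 + y / ((n : ℝ) / 2 + 45)) ^ φ := Real.mul_rpow hb.le (by positivity)
    _ ≤ (1 - q) ^ φ * (1 + p * ((1 - q) ^ (-Δ) - 1)) := by gcongr
    _ = (1 - p) * (1 - q) ^ φ + p * (1 - q) ^ (φ - Δ) := by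
        rw [sub_eq_add_neg φ Δ, Real.rpow_add hb]
        ring

lemma isMergeSupersolution_coupon (hn : 4096 ≤ n) :
    IsMergeSupersolution n fun t y => 1 - max 0 ((1 - couponMissProb n t) ^ y - 1 / 16) := by
  have hbase (t : ℕ) : 0 < 1 - couponMissProb n t ∧ 1 - couponMissProb n t ≤ 1 := by
    constructor <;> linarith [(couponMissProb_mem_Ioc n t).1, (couponMissProb_mem_Ioc n t).2]
  refine ⟨fun y hy => ?_, fun t y hy => ?_, fun t y z hyz => ?_,
    fun t y p Δ hy hp0 hp1 hΔ hpΔ => ?_⟩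
  · have hpow : (1 - couponMissProb n 0) ^ y ≤ 1 - couponMissProb n 0 :=
      (Real.rpow_le_rpow_of_exponent_ge (hbase 0).1 (hbase 0).2 hy).trans_eq (Real.rpow_one _)
    have hzero : couponMissProb n 0 = 15 / 16 := by simp [couponMissProb]
    rw [max_eq_left (by linarith), sub_zero]
  · have := Real.rpow_le_one (hbase t).1.le (hbase t).2 hy
    exact sub_nonneg.2 (max_le zero_le_one (by linarith))
  · have := Real.rpow_le_rpow_of_exponent_ge (hbase t).1 (hbase t).2 hyz
    gcongr
  · set A := max 0 ((1 - couponMissProb n t) ^ y - 1 / 16)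
    set B := max 0 ((1 - couponMissProb n t) ^ (y - Δ) - 1 / 16)
    have hA := mul_le_mul_of_nonneg_left
      (le_max_right 0 ((1 - couponMissProb n t) ^ y - 1 / 16)) (sub_nonneg.2 hp1)
    have hB := mul_le_mul_of_nonneg_left
      (le_max_right 0 ((1 - couponMissProb n t) ^ (y - Δ) - 1 / 16)) hp0
    have hAB : 0 ≤ (1 - p) * A + p * B := add_nonneg
      (mul_nonneg (sub_nonneg.2 hp1) (le_max_left _ _)) (mul_nonneg hp0 (le_max_left _ _))
    have hnext : max 0 ((1 - couponMissProb n (t + 1)) ^ y - 1 / 16) ≤ (1 - p) * A + p * B := by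
      refine max_le hAB ?_
      rcases le_total (1 / 16) ((1 - couponMissProb n (t + 1)) ^ y) with hbig | hsmall
      · linarith [one_sub_couponMissProb_rpow_le hn hy hp0 hΔ hpΔ hbig]
      · linarith
    linarith

end Supersolutions

section Connectivity

variable {n T : ℕ} {c : ℝ}

lemma linear_supersolution_le_rpow (hn : 2 ≤ n) (hT : (1 / 2 + 2 * c) * n * Real.log n ≤ T)
    (hu : (n : ℝ) ^ (-c) ≤ 3 / 4) :
    (2 * n - 3) * (1 - 2 / (n : ℝ)) ^ T ≤ (n : ℝ) ^ (-c) := by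
  have hn' : (2 : ℝ) ≤ n := by exact_mod_cast hn
  have hn0 : (0 : ℝ) < n := by linarith
  set u := (n : ℝ) ^ (-c)
  have hu0 : 0 ≤ u := by positivity
  have hbase : 0 ≤ 1 - 2 / (n : ℝ) := sub_nonneg.2 ((div_le_one hn0).2 (by linarith))
  have hdecay : (1 - 2 / (n : ℝ)) ^ T ≤ u ^ 4 / n :=
    calc (1 - 2 / (n : ℝ)) ^ T ≤ Real.exp (-(2 / n)) ^ T := by
          gcongr
          exact Real.one_sub_le_exp_neg _
      _ = Real.exp (-(2 * T / n)) := by rw [← Real.exp_nat_mul]; congr 1; ring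
      _ ≤ Real.exp (Real.log n * (-c * 4 - 1)) := by
          gcongr
          rw [neg_le, le_div_iff₀ hn0]
          linarith
      _ = u ^ 4 / n := by
          rw [← Real.rpow_def_of_pos hn0, Real.rpow_sub_one hn0.ne', Real.rpow_mul hn0.le]
          norm_cast
  calc (2 * n - 3) * (1 - 2 / (n : ℝ)) ^ T ≤ 2 * n * (u ^ 4 / n) := by gcongr; linarith
    _ = 2 * u ^ 3 * u := by field_simp
    _ ≤ 2 * (3 / 4) ^ 3 * u := by gcongr
    _ ≤ u := by linarith

lemma exp_five_halves_le : Real.exp (5 / 2) ≤ 12.2 := by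
  refine le_of_sq_le_sq ?_ (by norm_num)
  rw [← Real.exp_nat_mul, show ((2 : ℕ) : ℝ) * (5 / 2) = (5 : ℕ) * 1 by norm_num,
    Real.exp_nat_mul]
  exact (pow_le_pow_left₀ (Real.exp_pos _).le Real.exp_one_lt_d9.le 5).trans (by norm_num)

lemma seventeen_div_sixteen_sub_le_exp {u : ℝ} (h0 : 3 / 4 ≤ u) (h1 : u ≤ 1) :
    17 / 16 - u ≤ Real.exp (-(5 / 2 * u ^ 4)) := by
  obtain ⟨v, rfl⟩ : ∃ v, u = 1 - v := ⟨1 - u, by ring⟩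
  have hv0 : 0 ≤ v := by linarith
  set w := 5 / 2 * (1 - (1 - v) ^ 4) with hw
  have hw_ge : 10 * v - 15 * v ^ 2 + 7.5 * v ^ 3 ≤ w := by
    have : 0 ≤ v ^ 3 * (1 - v) := mul_nonneg (by positivity) (by linarith)
    rw [hw]
    linarith
  have hw0 : 0 ≤ w := by nlinarith [pow_nonneg hv0 3]
  have hpoly : 12.2 * (17 / 16 - (1 - v)) ≤ 1 + w + w ^ 2 / 2 := by
    rcases le_total v (1 / 8) with hv | hv
    · nlinarith [sq_nonneg (w - 0.6), pow_nonneg hv0 3]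
    · have hcube : 0.12 * v - 0.016 ≤ v ^ 3 := by nlinarith [mul_nonneg hv0 (sq_nonneg (v - 0.2))]
      nlinarith [sq_nonneg (w - 1.4)]
  have hsplit : Real.exp (-(5 / 2 * (1 - v) ^ 4)) = Real.exp w / Real.exp (5 / 2) := by
    rw [← Real.exp_sub, hw]
    ring_nf
  rw [hsplit, le_div_iff₀ (Real.exp_pos _)]
  calc (17 / 16 - (1 - v)) * Real.exp (5 / 2) ≤ (17 / 16 - (1 - v)) * 12.2 :=
        mul_le_mul_of_nonneg_left exp_five_halves_le (by linarith)
    _ ≤ 1 + w + w ^ 2 / 2 := by linarith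
    _ ≤ Real.exp w := Real.quadratic_le_exp_of_nonneg hw0

lemma log_natCast_le (hn : 4096 ≤ n) : Real.log n ≤ 8.318 / 4096 * n := by
  have hn' : (4096 : ℝ) ≤ n := by exact_mod_cast hn
  have hlog := Real.log_le_sub_one_of_pos (x := (n : ℝ) / 4096) (by positivity)
  rw [Real.log_div (by positivity) (by norm_num), show (4096 : ℝ) = 2 ^ 12 by norm_num,
    Real.log_pow] at hlog
  push_cast at hlog
  linarith [Real.log_two_lt_d9]

lemma log_sub_le_div (hn : 4096 ≤ n) (hT : (1 / 2 + 2 * c) * n * Real.log n ≤ T)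
    (hu : 3 / 4 ≤ (n : ℝ) ^ (-c)) :
    Real.log n * (1 + 4 * c) - 1 / 4 ≤ T / ((n : ℝ) / 2 + 45) := by
  have hn' : (4096 : ℝ) ≤ n := by exact_mod_cast hn
  have hclog : c * Real.log n ≤ 1 / 3 := by
    have hlog := Real.one_sub_inv_le_log_of_pos (x := (n : ℝ) ^ (-c)) (by positivity)
    rw [Real.log_rpow (by positivity)] at hlog
    have := inv_anti₀ (by norm_num) hu
    linarith
  rw [le_div_iff₀ (by positivity)]
  linarith [log_natCast_le hn]

lemma couponMissProb_le (hn : 4096 ≤ n) (hT : (1 / 2 + 2 * c) * n * Real.log n ≤ T)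
    (hu : 3 / 4 ≤ (n : ℝ) ^ (-c)) :
    couponMissProb n T ≤ 5 / 4 * ((n : ℝ) ^ (-c)) ^ 4 / n := by
  have hn0 : (0 : ℝ) < n := by positivity
  have hpow : (1 - 1 / ((n : ℝ) / 2 + 45)) ^ T ≤ 4 / 3 * (((n : ℝ) ^ (-c)) ^ 4 / n) :=
    calc (1 - 1 / ((n : ℝ) / 2 + 45)) ^ T ≤ Real.exp (-(1 / ((n : ℝ) / 2 + 45))) ^ T := by
          gcongr
          · exact sub_nonneg.2 ((div_le_one (by positivity)).2 (by linarith))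
          · exact Real.one_sub_le_exp_neg _
      _ = Real.exp (-(T / ((n : ℝ) / 2 + 45))) := by rw [← Real.exp_nat_mul]; congr 1; ring
      _ ≤ Real.exp (1 / 4 + Real.log n * (-c * 4 - 1)) := by
          gcongr
          linarith [log_sub_le_div hn hT hu]
      _ ≤ 1 / (1 - 1 / 4) * Real.exp (Real.log n * (-c * 4 - 1)) := by
          rw [Real.exp_add]
          gcongr
          exact Real.exp_bound_div_one_sub_of_interval (by norm_num) (by norm_num)
      _ = 4 / 3 * (((n : ℝ) ^ (-c)) ^ 4 / n) := by
          rw [← Real.rpow_def_of_pos hn0, Real.rpow_sub_one hn0.ne', Real.rpow_mul hn0.le]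
          norm_num
  calc couponMissProb n T ≤ 15 / 16 * (4 / 3 * (((n : ℝ) ^ (-c)) ^ 4 / n)) := by
        rw [couponMissProb]
        gcongr
    _ = 5 / 4 * ((n : ℝ) ^ (-c)) ^ 4 / n := by ring

lemma exp_le_one_sub_rpow {q N z : ℝ} (hN : 0 ≤ N) (hq : q < 1) (hz : N * q ≤ z * (1 - q)) :
    Real.exp (-z) ≤ (1 - q) ^ N := by
  have hb : 0 < 1 - q := sub_pos.2 hq
  have hlog : -(q / (1 - q)) ≤ Real.log (1 - q) := by
    convert Real.one_sub_inv_le_log_of_pos hb using 1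
    field_simp
    ring
  rw [Real.rpow_def_of_pos hb]
  gcongr
  calc -z ≤ -(N * q / (1 - q)) := neg_le_neg ((div_le_iff₀ hb).2 hz)
    _ = -(q / (1 - q)) * N := by ring
    _ ≤ Real.log (1 - q) * N := by gcongr

lemma coupon_supersolution_le_rpow (hn : 4096 ≤ n) (hc : 0 ≤ c)
    (hT : (1 / 2 + 2 * c) * n * Real.log n ≤ T) (hu : 3 / 4 ≤ (n : ℝ) ^ (-c)) :
    1 - max 0 ((1 - couponMissProb n T) ^ (2 * n - 3 : ℝ) - 1 / 16) ≤ (n : ℝ) ^ (-c) := by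
  have hn' : (4096 : ℝ) ≤ n := by exact_mod_cast hn
  have hmiss := couponMissProb_le hn hT hu
  have hu1 : (n : ℝ) ^ (-c) ≤ 1 :=
    Real.rpow_le_one_of_one_le_of_nonpos (by linarith) (neg_nonpos.2 hc)
  obtain ⟨hq0, hq1⟩ := couponMissProb_mem_Ioc n T
  set u := (n : ℝ) ^ (-c)
  set q := couponMissProb n T
  have hpow : Real.exp (-(5 / 2 * u ^ 4)) ≤ (1 - q) ^ (2 * n - 3 : ℝ) := by
    have hu4 : u ^ 4 ≤ 1 := pow_le_one₀ (by linarith) hu1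
    have hqn : q * n ≤ 5 / 4 * u ^ 4 := (le_div_iff₀ (by linarith)).1 hmiss
    refine exp_le_one_sub_rpow (by linarith) (by linarith) ?_
    nlinarith
  linarith [le_max_right 0 ((1 - q) ^ (2 * n - 3 : ℝ) - 1 / 16),
    seventeen_div_sixteen_sub_le_exp hu hu1]

lemma measure_one_lt_numBlocks_pathLabels_le (hn : 4096 ≤ n) (hc : 0 ≤ c)
    (hT : (1 / 2 + 2 * c) * n * Real.log n ≤ T) :
    Measure.pi (fun _ => unifOn (pairsF n)) {e | 1 < numBlocks (pathLabels T e)} ≤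
      ENNReal.ofReal ((n : ℝ) ^ (-c)) := by
  have hn2 : 2 ≤ n := by lia
  rcases le_total ((n : ℝ) ^ (-c)) (3 / 4) with hu | hu
  · exact ((isMergeSupersolution_linear hn2).measure_one_lt_numBlocks_le hn2 T).trans
      (ENNReal.ofReal_le_ofReal (linear_supersolution_le_rpow hn2 hT hu))
  · exact ((isMergeSupersolution_coupon hn).measure_one_lt_numBlocks_le hn2 T).trans
      (ENNReal.ofReal_le_ofReal (coupon_supersolution_le_rpow hn hc hT hu))

end Connectivity

section CoupledStep

variable {n : ℕ}

lemma measurable_columnDiff (k : Fin n) :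
    Measurable fun z : NarrowMatrix n × NarrowMatrix n => columnDiff z k := by
  unfold columnDiff
  fun_prop

lemma measurable_balancingDiff (L : Fin n → Fin n) (i : Fin n) :
    Measurable fun z : NarrowMatrix n × NarrowMatrix n => balancingDiff L i z :=
  (Finset.measurable_sum _ fun k _ => measurable_columnDiff k).neg

lemma measurableSet_blockCoupled (L : Fin n → Fin n) (D : ℝ) :
    MeasurableSet {z | BlockCoupled L D z} := by
  have hbalanced : MeasurableSet {z : NarrowMatrix n × NarrowMatrix n |
      BlockBalanced L D (columnDiff z)} := by
    simp only [BlockBalanced, Set.ofPred_forall]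
    exact .iInter fun b => .inter
      (measurableSet_eq_fun (Finset.measurable_sum _ fun k _ => measurable_columnDiff k)
        measurable_const)
      (measurableSet_le (Finset.measurable_sum _ fun k _ => (measurable_columnDiff k).abs)
        measurable_const)
  exact ((measurable_fst measurableSet_MSet).inter (measurable_snd measurableSet_MSet)).inter
    hbalanced

/-- The uniform variables with which the two chains in the states `z` resample the pair `e`, when
the later edges have merged the rows into the blocks of `L`. The absolute values change nothing on
`M_n` and keep both variables uniform for every `z`. -/
def coupledLambda (L : Fin n → Fin n) (e : Fin n × Fin n) (z : NarrowMatrix n × NarrowMatrix n)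
    (w : ℝ × ℝ) : ℝ × ℝ :=
  let s := z.1 (e.1, 0) + z.1 (e.2, 0)
  let t := z.2 (e.1, 0) + z.2 (e.2, 0)
  if L e.1 = L e.2 then (w.1, w.1)
  else coupledUniforms |pairLength s| |pairLength t|
    (pairLower t + balancingDiff L e.1 z - pairLower s) w

/-- One step of the coupling: both chains resample the pair `e`, see `coupledLambda`. -/
def coupledStep (L : Fin n → Fin n) (e : Fin n × Fin n) (z : NarrowMatrix n × NarrowMatrix n)
    (w : ℝ × ℝ) : NarrowMatrix n × NarrowMatrix n :=
  (stepM n z.1 (e, (coupledLambda L e z w).1), stepM n z.2 (e, (coupledLambda L e z w).2))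

lemma measurable_coupledLambda_uncurry (L : Fin n → Fin n) (e : Fin n × Fin n) :
    Measurable fun p : (NarrowMatrix n × NarrowMatrix n) × ℝ × ℝ =>
      coupledLambda L e p.1 p.2 := by
  unfold coupledLambda
  split_ifs
  · fun_prop
  · have hdiff := measurable_balancingDiff L e.1
    exact measurable_coupledUniforms_uncurry.comp
      (f := fun p : (NarrowMatrix n × NarrowMatrix n) × ℝ × ℝ =>
        ((|pairLength (p.1.1 (e.1, 0) + p.1.1 (e.2, 0))|,
          |pairLength (p.1.2 (e.1, 0) + p.1.2 (e.2, 0))|,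
          pairLower (p.1.2 (e.1, 0) + p.1.2 (e.2, 0)) + balancingDiff L e.1 p.1 -
            pairLower (p.1.1 (e.1, 0) + p.1.1 (e.2, 0))), p.2)) (by fun_prop)

lemma measurable_coupledStep_uncurry (L : Fin n → Fin n) (e : Fin n × Fin n) :
    Measurable fun p : (NarrowMatrix n × NarrowMatrix n) × ℝ × ℝ => coupledStep L e p.1 p.2 := by
  have hlambda := measurable_coupledLambda_uncurry L e
  exact ((measurable_stepM e).comp (measurable_fst.fst.prodMk hlambda.fst)).prodMk
    ((measurable_stepM e).comp (measurable_fst.snd.prodMk hlambda.snd))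

lemma measurePreserving_coupledLambda_fst (L : Fin n → Fin n) (e : Fin n × Fin n)
    (z : NarrowMatrix n × NarrowMatrix n) :
    MeasurePreserving (fun w => (coupledLambda L e z w).1) (unitUniform.prod unitUniform)
      unitUniform := by
  refine ⟨((measurable_coupledLambda_uncurry L e).comp measurable_prodMk_left).fst, ?_⟩
  unfold coupledLambda
  split_ifs
  · exact measurePreserving_fst.map_eq
  · exact map_coupledUniforms_fst (abs_nonneg _) (abs_nonneg _) _

lemma measurePreserving_coupledLambda_snd (L : Fin n → Fin n) (e : Fin n × Fin n)
    (z : NarrowMatrix n × NarrowMatrix n) :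
    MeasurePreserving (fun w => (coupledLambda L e z w).2) (unitUniform.prod unitUniform)
      unitUniform := by
  refine ⟨((measurable_coupledLambda_uncurry L e).comp measurable_prodMk_left).snd, ?_⟩
  unfold coupledLambda
  split_ifs
  · exact measurePreserving_fst.map_eq
  · exact map_coupledUniforms_snd (abs_nonneg _) (abs_nonneg _) _

lemma ae_coupledLambda_mem_Icc (L : Fin n → Fin n) (e : Fin n × Fin n)
    (z : NarrowMatrix n × NarrowMatrix n) :
    ∀ᵐ w ∂unitUniform.prod unitUniform, (coupledLambda L e z w).1 ∈ Set.Icc (0 : ℝ) 1 ∧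
      (coupledLambda L e z w).2 ∈ Set.Icc (0 : ℝ) 1 :=
  ((measurePreserving_coupledLambda_fst L e z).quasiMeasurePreserving.ae
    ae_unitUniform_mem_Icc).and
    ((measurePreserving_coupledLambda_snd L e z).quasiMeasurePreserving.ae ae_unitUniform_mem_Icc)

lemma map_snd_map_coupledStep [IsProbabilityMeasure (UM n)] (L : Fin n → Fin n)
    {e : Fin n × Fin n} (he : e.1 ≠ e.2) {μ : Measure (NarrowMatrix n × NarrowMatrix n)}
    [SFinite μ] (hμ : μ.map Prod.snd = UM n) :
    ((μ.prod (unitUniform.prod unitUniform)).map fun p => coupledStep L e p.1 p.2).map Prod.snd =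
      UM n := by
  have hlambda : MeasurePreserving
      (fun p : (NarrowMatrix n × NarrowMatrix n) × ℝ × ℝ => (p.1.2, (coupledLambda L e p.1 p.2).2))
      (μ.prod (unitUniform.prod unitUniform)) ((UM n).prod unitUniform) :=
    MeasurePreserving.skew_product (f := Prod.snd) (g := fun z w => (coupledLambda L e z w).2)
      ⟨measurable_snd, hμ⟩ (measurable_coupledLambda_uncurry L e).snd
      (.of_forall fun z => (measurePreserving_coupledLambda_snd L e z).map_eq)
  rw [Measure.map_map measurable_snd (measurable_coupledStep_uncurry L e), ← UM_map_stepM he,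
    ← hlambda.map_eq, Measure.map_map (measurable_stepM _) hlambda.measurable]
  rfl

lemma BlockCoupled.ae_coupledStep_of_eq {L : Fin n → Fin n} {e : Fin n × Fin n} (he : e.1 ≠ e.2)
    {D : ℝ} {z : NarrowMatrix n × NarrowMatrix n} (hz : BlockCoupled L D z)
    (hL : L e.1 = L e.2) :
    ∀ᵐ w ∂unitUniform.prod unitUniform, BlockCoupled L D (coupledStep L e z w) := by
  filter_upwards [ae_coupledLambda_mem_Icc L e z] with w hw
  have hlambda : coupledLambda L e z w = (w.1, w.1) := if_pos hL
  rw [coupledStep, hlambda]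
  rw [hlambda] at hw
  exact hz.step_of_eq he hL hw.1

lemma BlockCoupled.measure_not_coupledStep_le {L : Fin n → Fin n} {e : Fin n × Fin n} {D r : ℝ}
    (hr : 0 < r) (hD : 2 * D ≤ r) {z : NarrowMatrix n × NarrowMatrix n}
    (hz : BlockCoupled (mergeLabels L e) D z) (hL : L e.1 ≠ L e.2)
    (hlength : r ≤ pairLength (z.2 (e.1, 0) + z.2 (e.2, 0))) :
    (unitUniform.prod unitUniform) {w | ¬BlockCoupled L D (coupledStep L e z w)} ≤
      ENNReal.ofReal (9 * D / r) := by
  set s := z.1 (e.1, 0) + z.1 (e.2, 0) with hs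
  set t := z.2 (e.1, 0) + z.2 (e.2, 0) with ht
  set κ := pairLower t + balancingDiff L e.1 z - pairLower s with hκ
  have hsum : |s - t| ≤ D := hz.abs_pair_sum_sub_le hL
  have hκD : |κ| ≤ 2 * D := by
    calc |κ| = |balancingDiff L e.1 z - (pairLower s - pairLower t)| := by
          rw [hκ]
          congr 1
          ring
      _ ≤ |balancingDiff L e.1 z| + |pairLower s - pairLower t| := abs_sub _ _
      _ ≤ D + D := add_le_add (hz.abs_balancingDiff_le hL) ((abs_pairLower_sub_le s t).trans hsum)
      _ = 2 * D := (two_mul D).symm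
  have hs0 : 0 ≤ pairLength s :=
    pairLength_nonneg (pair_sum_mem_Icc hz.1.1 _ _).1 (pair_sum_mem_Icc hz.1.1 _ _).2
  refine (measure_mono_ae ?_).trans (measure_coupledUniforms_ne_le hlength
    ((abs_pairLength_sub_le s t).trans hsum) hκD hr hD)
  filter_upwards [ae_coupledLambda_mem_Icc L e z] with w hw hfail hbal
  have hlambda : coupledLambda L e z w = coupledUniforms (pairLength s) (pairLength t) κ w := by
    rw [coupledLambda, if_neg hL, ← hs, ← ht, abs_of_nonneg hs0, abs_of_pos (hr.trans_le hlength)]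
  refine hfail (hz.step_of_ne hL hw.1 hw.2 ?_)
  simp only [columnDiff, stepM_apply_fst, hlambda]
  linear_combination hbal

lemma measure_not_blockCoupled_map_coupledStep_le [IsProbabilityMeasure (UM n)] (hn : 2 ≤ n)
    (L : Fin n → Fin n) {e : Fin n × Fin n} (he : e.1 ≠ e.2) {D r : ℝ} (hr : 0 < r)
    (hD : 2 * D ≤ r) {μ : Measure (NarrowMatrix n × NarrowMatrix n)} [IsProbabilityMeasure μ]
    (hμ : μ.map Prod.snd = UM n) :
    ((μ.prod (unitUniform.prod unitUniform)).map fun p => coupledStep L e p.1 p.2)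
        {z | ¬BlockCoupled L D z} ≤
      μ {z | ¬BlockCoupled (mergeLabels L e) D z} +
        if L e.1 = L e.2 then 0 else ENNReal.ofReal (2 * n * r) + ENNReal.ofReal (9 * D / r) := by
  have hstep := measurable_coupledStep_uncurry L e
  have hfail : MeasurableSet {z | ¬BlockCoupled L D z} := (measurableSet_blockCoupled L D).compl
  set bad : Set (NarrowMatrix n × NarrowMatrix n) := {z | ¬BlockCoupled (mergeLabels L e) D z}
  have hbad : MeasurableSet bad := (measurableSet_blockCoupled _ D).compl
  rw [Measure.map_apply hstep hfail, Measure.prod_apply (hstep hfail)]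
  split_ifs with hL
  · rw [add_zero, ← lintegral_indicator_one hbad]
    refine lintegral_mono fun z => ?_
    by_cases hz : z ∈ bad
    · rw [Set.indicator_of_mem hz]
      exact prob_le_one
    · have hz' : BlockCoupled L D z := by simpa [bad, mergeLabels_of_eq hL] using hz
      exact (hz'.ae_coupledStep_of_eq he hL : _ = _).trans_le zero_le
  · set short : Set (NarrowMatrix n) := {y | pairLength (y (e.1, 0) + y (e.2, 0)) < r}
    have hshort : MeasurableSet short := measurableSet_lt (by fun_prop) measurable_const
    have hμshort : μ (Prod.snd ⁻¹' short) ≤ ENNReal.ofReal (2 * n * r) := by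
      rw [← Measure.map_apply measurable_snd hshort, hμ]
      exact UM_pairLength_lt_le hn e.1 e.2 r
    calc _ ≤ ∫⁻ z, (bad.indicator 1 z + ((Prod.snd ⁻¹' short).indicator 1 z +
          ENNReal.ofReal (9 * D / r))) ∂μ := by
          refine lintegral_mono fun z => ?_
          by_cases hz : z ∈ bad
          · rw [Set.indicator_of_mem hz]
            exact prob_le_one.trans le_self_add
          by_cases hzs : z ∈ Prod.snd ⁻¹' short
          · rw [Set.indicator_of_mem hzs]
            exact prob_le_one.trans (le_self_add.trans le_add_self)
          · exact ((not_not.1 hz).measure_not_coupledStep_le hr hD hL (not_lt.1 hzs)).trans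
              (le_add_self.trans le_add_self)
      _ = μ bad + (μ (Prod.snd ⁻¹' short) + ENNReal.ofReal (9 * D / r)) := by
          rw [lintegral_add_left (measurable_one.indicator hbad),
            lintegral_add_left (measurable_one.indicator (measurable_snd hshort)),
            lintegral_indicator_one hbad, lintegral_indicator_one (measurable_snd hshort),
            lintegral_const, measure_univ, mul_one]
      _ ≤ _ := by gcongr

end CoupledStep

section CoupledPath

variable {n : ℕ}

/-- The path of the Gibbs sampler started at `x` and driven by the updates `u`, as it appears in
`pathM`. -/
def gibbsPath {T : ℕ} (x : NarrowMatrix n) (u : Fin T → (Fin n × Fin n) × ℝ) :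
    Fin (T + 1) → NarrowMatrix n :=
  fun s => ((List.ofFn u).take s).foldl (stepM n) x

@[simp]
lemma gibbsPath_zero {T : ℕ} (x : NarrowMatrix n) (u : Fin T → (Fin n × Fin n) × ℝ) :
    gibbsPath x u 0 = x := by
  simp [gibbsPath]

lemma gibbsPath_succ {T : ℕ} (x : NarrowMatrix n) (u : Fin (T + 1) → (Fin n × Fin n) × ℝ)
    (s : Fin (T + 1)) :
    gibbsPath x u s.succ = gibbsPath (stepM n x (u 0)) (Fin.tail u) s := by
  simp only [gibbsPath, List.ofFn_succ, Fin.val_succ, List.take_succ_cons, List.foldl_cons]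
  rfl

lemma measurable_stepM_uncurry :
    Measurable fun p : NarrowMatrix n × (Fin n × Fin n) × ℝ => stepM n p.1 p.2 := by
  have hswap : Measurable fun q : (Fin n × Fin n) × NarrowMatrix n × ℝ =>
      stepM n q.2.1 (q.1, q.2.2) := measurable_from_prod_countable_right fun e => measurable_stepM e
  exact hswap.comp (f := fun p : NarrowMatrix n × (Fin n × Fin n) × ℝ => (p.2.1, p.1, p.2.2))
    (by fun_prop)

lemma measurable_fin_tail {α : Type*} [MeasurableSpace α] (T : ℕ) :
    Measurable fun w : Fin (T + 1) → α => Fin.tail w :=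
  measurable_pi_lambda _ fun k => measurable_pi_apply k.succ

lemma measurable_gibbsPath_uncurry (T : ℕ) :
    Measurable fun p : NarrowMatrix n × (Fin T → (Fin n × Fin n) × ℝ) => gibbsPath p.1 p.2 := by
  refine measurable_pi_lambda _ ?_
  induction T with
  | zero =>
    refine Fin.cases ?_ fun s => s.elim0
    simpa only [gibbsPath_zero] using measurable_fst
  | succ T ih =>
    refine Fin.cases (by simpa only [gibbsPath_zero] using measurable_fst) fun s => ?_
    simp only [gibbsPath_succ]
    have hhead : Measurable fun p : NarrowMatrix n × (Fin (T + 1) → (Fin n × Fin n) × ℝ) =>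
        (p.1, p.2 0) := by fun_prop
    exact (ih s).comp ((measurable_stepM_uncurry.comp hhead).prodMk
      ((measurable_fin_tail T).comp measurable_snd))

/-- The uniform variables with which the coupled chains started in `z` resample the pairs `e`.
At each time the blocks are those formed by the later edges. -/
def coupledLambdas : (T : ℕ) → (Fin T → Fin n × Fin n) → NarrowMatrix n × NarrowMatrix n →
    (Fin T → ℝ × ℝ) → Fin T → ℝ × ℝ
  | 0, _, _, w => w
  | T + 1, e, z, w =>
    let L := pathLabels T (Fin.tail e)
    Fin.cons (coupledLambda L (e 0) z (w 0))
      (coupledLambdas T (Fin.tail e) (coupledStep L (e 0) z (w 0)) (Fin.tail w))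

/-- The coupled chains started in `z` and resampling the pairs `e`, see `coupledLambdas`. -/
def coupledPath {T : ℕ} (e : Fin T → Fin n × Fin n) (z : NarrowMatrix n × NarrowMatrix n)
    (w : Fin T → ℝ × ℝ) (s : Fin (T + 1)) : NarrowMatrix n × NarrowMatrix n :=
  (gibbsPath z.1 (fun k => (e k, (coupledLambdas T e z w k).1)) s,
    gibbsPath z.2 (fun k => (e k, (coupledLambdas T e z w k).2)) s)

lemma coupledPath_zero {T : ℕ} (e : Fin T → Fin n × Fin n) (z : NarrowMatrix n × NarrowMatrix n)
    (w : Fin T → ℝ × ℝ) : coupledPath e z w 0 = z := by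
  simp only [coupledPath, gibbsPath_zero]

lemma coupledPath_succ {T : ℕ} (e : Fin (T + 1) → Fin n × Fin n)
    (z : NarrowMatrix n × NarrowMatrix n) (w : Fin (T + 1) → ℝ × ℝ) (s : Fin (T + 1)) :
    coupledPath e z w s.succ = coupledPath (Fin.tail e)
      (coupledStep (pathLabels T (Fin.tail e)) (e 0) z (w 0)) (Fin.tail w) s := by
  simp only [coupledPath, gibbsPath_succ]
  rfl

lemma measurable_coupledLambdas_uncurry {T : ℕ} (e : Fin T → Fin n × Fin n) :
    Measurable fun p : (NarrowMatrix n × NarrowMatrix n) × (Fin T → ℝ × ℝ) =>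
      coupledLambdas T e p.1 p.2 := by
  induction T with
  | zero => exact measurable_snd
  | succ T ih =>
    have hhead : Measurable fun p : (NarrowMatrix n × NarrowMatrix n) × (Fin (T + 1) → ℝ × ℝ) =>
        (p.1, p.2 0) := by fun_prop
    refine measurable_pi_lambda _ (Fin.cases ?_ fun k => ?_)
    · exact (measurable_coupledLambda_uncurry _ (e 0)).comp hhead
    · exact (measurable_pi_apply k).comp ((ih (Fin.tail e)).comp
        (((measurable_coupledStep_uncurry _ (e 0)).comp hhead).prodMk
          ((measurable_fin_tail T).comp measurable_snd)))

lemma measurable_coupledPath_uncurry {T : ℕ} (e : Fin T → Fin n × Fin n) :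
    Measurable fun p : (NarrowMatrix n × NarrowMatrix n) × (Fin T → ℝ × ℝ) =>
      coupledPath e p.1 p.2 := by
  have hlambda := measurable_coupledLambdas_uncurry e
  have hfst := (measurable_gibbsPath_uncurry (n := n) T).comp
    (f := fun p : (NarrowMatrix n × NarrowMatrix n) × (Fin T → ℝ × ℝ) =>
      (p.1.1, fun k => (e k, (coupledLambdas T e p.1 p.2 k).1))) (by fun_prop)
  have hsnd := (measurable_gibbsPath_uncurry (n := n) T).comp
    (f := fun p : (NarrowMatrix n × NarrowMatrix n) × (Fin T → ℝ × ℝ) =>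
      (p.1.2, fun k => (e k, (coupledLambdas T e p.1 p.2 k).2))) (by fun_prop)
  exact measurable_pi_lambda _ fun s =>
    ((measurable_pi_apply s).comp hfst).prodMk ((measurable_pi_apply s).comp hsnd)

lemma measurePreserving_coupledLambdas {proj : ℝ × ℝ → ℝ} (hproj : Measurable proj)
    (hlambda : ∀ (L : Fin n → Fin n) e z, MeasurePreserving (fun w => proj (coupledLambda L e z w))
      (unitUniform.prod unitUniform) unitUniform)
    {T : ℕ} (e : Fin T → Fin n × Fin n) (z : NarrowMatrix n × NarrowMatrix n) :
    MeasurePreserving (fun (w : Fin T → ℝ × ℝ) k => proj (coupledLambdas T e z w k))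
      (Measure.pi fun _ => unitUniform.prod unitUniform) (Measure.pi fun _ => unitUniform) := by
  induction T generalizing z with
  | zero =>
    refine ⟨.of_discrete, ?_⟩
    rw [Measure.pi_of_empty, Measure.pi_of_empty, Measure.map_dirac' .of_discrete]
    exact congrArg Measure.dirac (Subsingleton.elim _ _)
  | succ T ih =>
    have hstep := (measurable_coupledStep_uncurry (pathLabels T (Fin.tail e)) (e 0)).comp
      (measurable_prodMk_left (x := z))
    have hrest := (measurable_coupledLambdas_uncurry (Fin.tail e)).comp
      ((hstep.comp measurable_fst).prodMk measurable_snd)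
    have hskew := MeasurePreserving.skew_product
      (g := fun (w₀ : ℝ × ℝ) (w : Fin T → ℝ × ℝ) k => proj (coupledLambdas T (Fin.tail e)
        (coupledStep (pathLabels T (Fin.tail e)) (e 0) z w₀) w k))
      (hlambda (pathLabels T (Fin.tail e)) (e 0) z)
      (measurable_pi_lambda _ fun k => hproj.comp ((measurable_pi_apply k).comp hrest))
      (.of_forall fun w₀ => (ih (Fin.tail e) _).map_eq)
    convert (measurePreserving_fin_cons unitUniform T).comp
      (hskew.comp (measurePreserving_fin_head_tail (unitUniform.prod unitUniform) T)) using 1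
    funext w
    exact funext (Fin.cases rfl fun k => rfl)

lemma measurePreserving_gibbsPath_coupledLambdas (hn : 2 ≤ n) (T : ℕ)
    {chain : NarrowMatrix n × NarrowMatrix n → NarrowMatrix n} (hchain : Measurable chain)
    {proj : ℝ × ℝ → ℝ} (hproj : Measurable proj)
    (hlambda : ∀ (L : Fin n → Fin n) e z, MeasurePreserving (fun w => proj (coupledLambda L e z w))
      (unitUniform.prod unitUniform) unitUniform)
    (μ : Measure (NarrowMatrix n × NarrowMatrix n)) [IsProbabilityMeasure μ] :
    MeasurePreserving (fun q : (Fin T → Fin n × Fin n) ×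
        (NarrowMatrix n × NarrowMatrix n) × (Fin T → ℝ × ℝ) =>
        gibbsPath (chain q.2.1) fun k => (q.1 k, proj (coupledLambdas T q.1 q.2.1 q.2.2 k)))
      ((Measure.pi fun _ => unifOn (pairsF n)).prod
        (μ.prod (Measure.pi fun _ => unitUniform.prod unitUniform)))
      (pathM n T (μ.map chain)) := by
  have := isProbabilityMeasure_unifOn (Finset.card_pos.1 (card_pairsF_pos hn))
  have := Measure.isProbabilityMeasure_map (μ := μ) hchain.aemeasurable
  set ν := Measure.pi fun _ : Fin T => unifOn (pairsF n)
  set ρ := Measure.pi fun _ : Fin T => unitUniform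
  have hmeas : ∀ e : Fin T → Fin n × Fin n, Measurable
      fun p : (NarrowMatrix n × NarrowMatrix n) × (Fin T → ℝ × ℝ) =>
        fun k => proj (coupledLambdas T e p.1 p.2 k) := fun e =>
    measurable_pi_lambda _ fun k =>
      hproj.comp ((measurable_pi_apply k).comp (measurable_coupledLambdas_uncurry e))
  have hfixed : ∀ e : Fin T → Fin n × Fin n, MeasurePreserving
      (fun p : (NarrowMatrix n × NarrowMatrix n) × (Fin T → ℝ × ℝ) =>
        (chain p.1, fun k => proj (coupledLambdas T e p.1 p.2 k)))
      (μ.prod (Measure.pi fun _ => unitUniform.prod unitUniform)) ((μ.map chain).prod ρ) :=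
    fun e => MeasurePreserving.skew_product ⟨hchain, rfl⟩ (hmeas e)
      (.of_forall fun z => (measurePreserving_coupledLambdas hproj hlambda e z).map_eq)
  have hrandom := MeasurePreserving.skew_product (MeasurePreserving.id ν)
    (measurable_from_prod_countable_right fun e => (hfixed e).measurable)
    (.of_forall fun e => (hfixed e).map_eq)
  have hassoc := (measurePreserving_prodAssoc ν (μ.map chain) ρ).symm
  have hswap := (Measure.measurePreserving_swap (μ := ν) (ν := μ.map chain)).prod
    (MeasurePreserving.id ρ)
  have hpair := (MeasurePreserving.id (μ.map chain)).prod
    (measurePreserving_arrowProdEquivProdArrow (Fin n × Fin n) ℝ (Fin T)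
      (fun _ => unifOn (pairsF n)) (fun _ => unitUniform)).symm
  have hpath : MeasurePreserving
      (fun p : NarrowMatrix n × (Fin T → (Fin n × Fin n) × ℝ) => gibbsPath p.1 p.2)
      ((μ.map chain).prod (Measure.pi fun _ => (unifOn (pairsF n)).prod unitUniform))
      (pathM n T (μ.map chain)) := ⟨measurable_gibbsPath_uncurry T, rfl⟩
  exact hpath.comp (hpair.comp ((measurePreserving_prodAssoc _ _ ρ).comp
    (hswap.comp (hassoc.comp hrandom))))

lemma measurePreserving_coupledStep_head (L : Fin n → Fin n) (e : Fin n × Fin n)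
    (μ : Measure (NarrowMatrix n × NarrowMatrix n)) [IsProbabilityMeasure μ] (T : ℕ) :
    MeasurePreserving (fun p : (NarrowMatrix n × NarrowMatrix n) × (Fin (T + 1) → ℝ × ℝ) =>
        (coupledStep L e p.1 (p.2 0), Fin.tail p.2))
      (μ.prod (Measure.pi fun _ => unitUniform.prod unitUniform))
      (((μ.prod (unitUniform.prod unitUniform)).map fun p => coupledStep L e p.1 p.2).prod
        (Measure.pi fun _ => unitUniform.prod unitUniform)) := by
  have hmeas := measurable_coupledStep_uncurry L e
  set ρ := Measure.pi fun _ : Fin T => unitUniform.prod unitUniform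
  have := Measure.isProbabilityMeasure_map (μ := μ.prod (unitUniform.prod unitUniform))
    hmeas.aemeasurable
  have hstep := (hmeas.measurePreserving (μ.prod (unitUniform.prod unitUniform))).prod
    (MeasurePreserving.id ρ)
  have hassoc := (measurePreserving_prodAssoc μ (unitUniform.prod unitUniform) ρ).symm
  have hsplit := (MeasurePreserving.id μ).prod
    (measurePreserving_fin_head_tail (unitUniform.prod unitUniform) T)
  exact hstep.comp (hassoc.comp hsplit)

lemma natCast_sub_numBlocks_mergeLabels (L : Fin n → Fin n) (e : Fin n × Fin n) :
    ((n - numBlocks (mergeLabels L e) : ℕ) : ENNReal) =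
      (n - numBlocks L : ℕ) + if L e.1 = L e.2 then 0 else 1 := by
  split_ifs with h
  · rw [mergeLabels_of_eq h, add_zero]
  · have hmerge := numBlocks_mergeLabels h
    have hle := (numBlocks_le_card L).trans_eq (Fintype.card_fin n)
    rw [← Nat.cast_add_one]
    congr 1
    omega

lemma measure_not_blockCoupled_coupledPath_last_le [IsProbabilityMeasure (UM n)] (hn : 2 ≤ n)
    {D r : ℝ} (hr : 0 < r) (hD : 2 * D ≤ r) {T : ℕ} {e : Fin T → Fin n × Fin n}
    (he : ∀ k, (e k).1 ≠ (e k).2) {μ : Measure (NarrowMatrix n × NarrowMatrix n)}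
    [IsProbabilityMeasure μ] (hμ : μ.map Prod.snd = UM n) :
    (μ.prod (Measure.pi fun _ => unitUniform.prod unitUniform))
        {p | ¬BlockCoupled id D (coupledPath e p.1 p.2 (Fin.last T))} ≤
      μ {z | ¬BlockCoupled (pathLabels T e) D z} + (n - numBlocks (pathLabels T e) : ℕ) *
        (ENNReal.ofReal (2 * n * r) + ENNReal.ofReal (9 * D / r)) := by
  induction T generalizing μ with
  | zero =>
    have hset : {p : (NarrowMatrix n × NarrowMatrix n) × (Fin 0 → ℝ × ℝ) |
        ¬BlockCoupled id D (coupledPath e p.1 p.2 (Fin.last 0))} =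
        {z | ¬BlockCoupled (pathLabels 0 e) D z} ×ˢ Set.univ := by
      ext p
      simp [pathLabels, coupledPath_zero]
    rw [hset, Measure.prod_prod, measure_univ, mul_one]
    exact le_self_add
  | succ T ih =>
    set L := pathLabels T (Fin.tail e) with hL
    set δ := ENNReal.ofReal (2 * n * r) + ENNReal.ofReal (9 * D / r)
    set σ := (μ.prod (unitUniform.prod unitUniform)).map fun p => coupledStep L (e 0) p.1 p.2
    have : IsProbabilityMeasure σ := Measure.isProbabilityMeasure_map
      (measurable_coupledStep_uncurry L (e 0)).aemeasurable
    have hfail : MeasurableSet {p : (NarrowMatrix n × NarrowMatrix n) × (Fin T → ℝ × ℝ) |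
        ¬BlockCoupled id D (coupledPath (Fin.tail e) p.1 p.2 (Fin.last T))} :=
      ((measurable_pi_apply (Fin.last T)).comp (measurable_coupledPath_uncurry (Fin.tail e)))
        (measurableSet_blockCoupled id D).compl
    calc _ = (σ.prod (Measure.pi fun _ => unitUniform.prod unitUniform))
          {p | ¬BlockCoupled id D (coupledPath (Fin.tail e) p.1 p.2 (Fin.last T))} := by
          rw [← (measurePreserving_coupledStep_head L (e 0) μ T).measure_preimage
            hfail.nullMeasurableSet]
          simp only [← Fin.succ_last, coupledPath_succ]
          rfl
      _ ≤ σ {z | ¬BlockCoupled L D z} + (n - numBlocks L : ℕ) * δ :=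
          ih (e := Fin.tail e) (fun k => he k.succ) (map_snd_map_coupledStep L (he 0) hμ)
      _ ≤ μ {z | ¬BlockCoupled (mergeLabels L (e 0)) D z} +
            (if L (e 0).1 = L (e 0).2 then 0 else δ) + (n - numBlocks L : ℕ) * δ := by
          gcongr
          exact measure_not_blockCoupled_map_coupledStep_le hn L (he 0) hr hD hμ
      _ = _ := by
          rw [pathLabels, ← hL, natCast_sub_numBlocks_mergeLabels]
          split_ifs <;> ring

lemma ae_pi_unifOn_pairsF_ne (hn : 2 ≤ n) (T : ℕ) :
    ∀ᵐ e ∂Measure.pi fun _ : Fin T => unifOn (pairsF n), ∀ k, (e k).1 ≠ (e k).2 := by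
  have := isProbabilityMeasure_unifOn (Finset.card_pos.1 (card_pairsF_pos hn))
  have hne : ∀ᵐ e ∂unifOn (pairsF n), e.1 ≠ e.2 := by
    filter_upwards [ae_unifOn_mem (pairsF n)] with e he
    exact (Finset.mem_filter.1 he).2.ne
  exact ae_all_iff.2 fun k =>
    (measurePreserving_eval (fun _ => unifOn (pairsF n)) k).quasiMeasurePreserving.ae hne

end CoupledPath

section Failure

variable {n : ℕ}

lemma measure_coupledPath_last_ne_le_of_numBlocks_le_one [IsProbabilityMeasure (UM n)] (hn : 2 ≤ n)
    {D r : ℝ} (hr : 0 < r) (hD : 2 * D ≤ r) {T : ℕ} {e : Fin T → Fin n × Fin n}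
    (he : ∀ k, (e k).1 ≠ (e k).2) (hblocks : numBlocks (pathLabels T e) ≤ 1)
    {μ : Measure (NarrowMatrix n × NarrowMatrix n)} [IsProbabilityMeasure μ]
    (hsupp : ∀ᵐ z ∂μ, z.1 ∈ MSet n ∧ z.2 ∈ MSet n) (hstat : μ.map Prod.snd = UM n)
    (hclose : ∀ᵐ z ∂μ, ∑ q : Fin n × Fin 2, |z.1 q - z.2 q| ≤ D) :
    (μ.prod (Measure.pi fun _ => unitUniform.prod unitUniform))
        {p | (coupledPath e p.1 p.2 (Fin.last T)).1 ≠ (coupledPath e p.1 p.2 (Fin.last T)).2} ≤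
      n * (ENNReal.ofReal (2 * n * r) + ENNReal.ofReal (9 * D / r)) := by
  have hstart : μ {z | ¬BlockCoupled (pathLabels T e) D z} = 0 := by
    refine ae_iff.1 ?_
    filter_upwards [hsupp, hclose] with z hz hzD
    exact .of_sum_abs_le (apply_eq_of_numBlocks_le_one hblocks) hz hzD
  calc _ ≤ (μ.prod (Measure.pi fun _ => unitUniform.prod unitUniform))
        {p | ¬BlockCoupled id D (coupledPath e p.1 p.2 (Fin.last T))} :=
        measure_mono fun p (hp : _ ≠ _) hcoupled => hp (BlockCoupled.eq_of_id hcoupled)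
    _ ≤ _ := measure_not_blockCoupled_coupledPath_last_le hn hr hD he hstat
    _ ≤ _ := by
        rw [hstart, zero_add]
        gcongr
        exact Nat.sub_le _ _

lemma measure_coupledPath_last_ne_le [IsProbabilityMeasure (UM n)] (hn : 2 ≤ n)
    {D r : ℝ} (hr : 0 < r) (hD : 2 * D ≤ r) (T : ℕ)
    {μ : Measure (NarrowMatrix n × NarrowMatrix n)} [IsProbabilityMeasure μ]
    (hsupp : ∀ᵐ z ∂μ, z.1 ∈ MSet n ∧ z.2 ∈ MSet n) (hstat : μ.map Prod.snd = UM n)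
    (hclose : ∀ᵐ z ∂μ, ∑ q : Fin n × Fin 2, |z.1 q - z.2 q| ≤ D) :
    ((Measure.pi fun _ => unifOn (pairsF n)).prod
        (μ.prod (Measure.pi fun _ => unitUniform.prod unitUniform)))
        {q | (coupledPath q.1 q.2.1 q.2.2 (Fin.last T)).1 ≠
          (coupledPath q.1 q.2.1 q.2.2 (Fin.last T)).2} ≤
      n * (ENNReal.ofReal (2 * n * r) + ENNReal.ofReal (9 * D / r)) +
        Measure.pi (fun _ => unifOn (pairsF n)) {e | 1 < numBlocks (pathLabels T e)} := by
  have := isProbabilityMeasure_unifOn (Finset.card_pos.1 (card_pairsF_pos hn))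
  have hlast : Measurable fun q : (Fin T → Fin n × Fin n) × (NarrowMatrix n × NarrowMatrix n) ×
      (Fin T → ℝ × ℝ) => coupledPath q.1 q.2.1 q.2.2 (Fin.last T) :=
    measurable_from_prod_countable_right fun e =>
      (measurable_pi_apply _).comp (measurable_coupledPath_uncurry e)
  have hfail : MeasurableSet {q : (Fin T → Fin n × Fin n) × (NarrowMatrix n × NarrowMatrix n) ×
      (Fin T → ℝ × ℝ) | (coupledPath q.1 q.2.1 q.2.2 (Fin.last T)).1 ≠
        (coupledPath q.1 q.2.1 q.2.2 (Fin.last T)).2} :=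
    (measurableSet_eq_fun hlast.fst hlast.snd).compl
  set disconnected := {e : Fin T → Fin n × Fin n | 1 < numBlocks (pathLabels T e)}
  set δ := ENNReal.ofReal (2 * n * r) + ENNReal.ofReal (9 * D / r)
  rw [Measure.prod_apply hfail]
  calc _ ≤ ∫⁻ e, (n * δ + disconnected.indicator 1 e)
        ∂Measure.pi fun _ : Fin T => unifOn (pairsF n) := by
        refine lintegral_mono_ae ?_
        filter_upwards [ae_pi_unifOn_pairsF_ne hn T] with e he
        by_cases hconn : e ∈ disconnected
        · rw [Set.indicator_of_mem hconn]
          exact prob_le_one.trans le_add_self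
        · exact (measure_coupledPath_last_ne_le_of_numBlocks_le_one hn hr hD he (not_lt.1 hconn)
            hsupp hstat hclose).trans le_self_add
    _ = _ := by
        rw [lintegral_add_left measurable_const, lintegral_const, measure_univ, mul_one,
          lintegral_indicator_one .of_discrete]

end Failure

lemma two_mul_rpow_neg_le {x a : ℝ} (hx : 2 ≤ x) (ha : 2 ≤ a) :
    2 * x ^ (-a) ≤ x ^ (-(a / 2)) := by
  have hx0 : 0 < x := two_pos.trans_le hx
  have hpow : 2 ≤ x ^ (a / 2) := hx.trans (Real.self_le_rpow_of_one_le (by linarith) (by linarith))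
  calc 2 * x ^ (-a) ≤ x ^ (a / 2) * x ^ (-a) := by gcongr
    _ = x ^ (-(a / 2)) := by
        rw [← Real.rpow_add hx0]
        ring_nf

lemma mul_rpow_add_rpow_div_rpow_le {x : ℝ} (hx : 2 ≤ x) (a : ℝ) :
    x * (2 * x * x ^ (-(a / 2)) + 9 * x ^ (-a) / x ^ (-(a / 2))) ≤ 10 * x ^ (3.75 - a / 2) := by
  have hx0 : 0 < x := two_pos.trans_le hx
  have hdiv : 9 * x ^ (-a) / x ^ (-(a / 2)) = 9 * x ^ (-(a / 2)) := by
    rw [mul_div_assoc, ← Real.rpow_sub hx0]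
    ring_nf
  have hpow : x ^ 2 ≤ x ^ (3.75 : ℝ) := by
    rw [← Real.rpow_natCast]
    exact Real.rpow_le_rpow_of_exponent_le (by linarith) (by norm_num)
  calc _ = (2 * x ^ 2 + 9 * x) * x ^ (-(a / 2)) := by
        rw [hdiv]
        ring
    _ ≤ 10 * x ^ (3.75 : ℝ) * x ^ (-(a / 2)) := by
        gcongr
        nlinarith
    _ = 10 * x ^ (3.75 - a / 2) := by
        rw [mul_assoc, ← Real.rpow_add hx0, sub_eq_add_neg]

lemma natCast_mul_ofReal_add_ofReal_le {n : ℕ} (hn : 2 ≤ n) (a : ℝ) :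
    (n : ENNReal) * (ENNReal.ofReal (2 * n * (n : ℝ) ^ (-(a / 2))) +
        ENNReal.ofReal (9 * (n : ℝ) ^ (-a) / (n : ℝ) ^ (-(a / 2)))) ≤
      ENNReal.ofReal (10 * (n : ℝ) ^ (3.75 - a / 2)) := by
  rw [← ENNReal.ofReal_add (by positivity) (by positivity), ← ENNReal.ofReal_natCast,
    ← ENNReal.ofReal_mul n.cast_nonneg]
  exact ENNReal.ofReal_le_ofReal (mul_rpow_add_rpow_div_rpow_le (by exact_mod_cast hn) a)

theorem narrow_matrices_coupling_for_nearby_points_general {n : ℕ} (hn : 4096 ≤ n) {c : ℝ}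
    (hc : 0 ≤ c) {D r : ℝ} (hr : 0 < r) (hD : 2 * D ≤ r)
    (μ₀ : Measure (NarrowMatrix n × NarrowMatrix n)) [IsProbabilityMeasure μ₀]
    (hsupp : ∀ᵐ p ∂μ₀, p.1 ∈ MSet n ∧ p.2 ∈ MSet n) (hstat : μ₀.map Prod.snd = UM n)
    (hclose : ∀ᵐ p ∂μ₀, ∑ q : Fin n × Fin 2, |p.1 q - p.2 q| ≤ D)
    (T : ℕ) (hT : (1 / 2 + 2 * c) * n * Real.log n ≤ (T : ℝ)) :
    ∃ P : Measure ((Fin (T + 1) → NarrowMatrix n) × (Fin (T + 1) → NarrowMatrix n)),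
      P.map Prod.fst = pathM n T (μ₀.map Prod.fst) ∧
      P.map Prod.snd = pathM n T (μ₀.map Prod.snd) ∧
      P.map (fun q => (q.1 0, q.2 0)) = μ₀ ∧
      P {q | q.1 (Fin.last T) ≠ q.2 (Fin.last T)} ≤
        n * (ENNReal.ofReal (2 * n * r) + ENNReal.ofReal (9 * D / r)) +
          ENNReal.ofReal ((n : ℝ) ^ (-c)) := by
  have hn2 : 2 ≤ n := by omega
  have := isProbabilityMeasure_unifOn (Finset.card_pos.1 (card_pairsF_pos hn2))
  have : IsProbabilityMeasure (UM n) :=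
    hstat ▸ Measure.isProbabilityMeasure_map measurable_snd.aemeasurable
  have hX := measurePreserving_gibbsPath_coupledLambdas hn2 T measurable_fst measurable_fst
    measurePreserving_coupledLambda_fst μ₀
  have hY := measurePreserving_gibbsPath_coupledLambdas hn2 T measurable_snd measurable_snd
    measurePreserving_coupledLambda_snd μ₀
  have hXY := hX.measurable.prodMk hY.measurable
  have hinit : MeasurePreserving
      (fun q : (Fin T → Fin n × Fin n) × (NarrowMatrix n × NarrowMatrix n) × (Fin T → ℝ × ℝ) =>
        q.2.1) ((Measure.pi fun _ => unifOn (pairsF n)).prod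
      (μ₀.prod (Measure.pi fun _ => unitUniform.prod unitUniform))) μ₀ :=
    measurePreserving_fst.comp measurePreserving_snd
  have hfail : MeasurableSet {q : (Fin (T + 1) → NarrowMatrix n) × (Fin (T + 1) → NarrowMatrix n) |
      q.1 (Fin.last T) ≠ q.2 (Fin.last T)} :=
    (measurableSet_eq_fun (by fun_prop) (by fun_prop)).compl
  refine ⟨_, (Measure.map_map measurable_fst hXY).trans hX.map_eq,
    (Measure.map_map measurable_snd hXY).trans hY.map_eq, ?_, ?_⟩
  · rw [Measure.map_map (by fun_prop) hXY]
    simp only [Function.comp_def, gibbsPath_zero]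
    exact hinit.map_eq
  · rw [Measure.map_apply hXY hfail]
    exact (measure_coupledPath_last_ne_le hn2 hr hD T hsupp hstat hclose).trans
      (add_le_add_right (measure_one_lt_numBlocks_pathLabels_le hn hc hT) _)

/-- Coupling for nearby points on narrow matrices: if `Y₀` is stationary and
`‖X₀ - Y₀‖₁ ≤ n^{-a}` almost surely, then there is a coupling of the two path laws
over `T ≥ (1/2 + 2c) n log n` steps under which `P[X_T ≠ Y_T] ≤ 10 n^{3.75 - a/2} + n^{-c}`. -/
theorem narrow_matrices_coupling_for_nearby_points
    (n : ℕ) (a c : ℝ) (ha : 7.5 < a) (hc : 0 < c)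
    (hn1 : max 4096 (a + 3.5) < (n : ℝ))
    (hn2 : 3 * (1 + 2 * c) * (1 / 2 + 2 * c) / c < (n : ℝ) / Real.log n)
    (μ₀ : Measure ((Fin n × Fin 2 → ℝ) × (Fin n × Fin 2 → ℝ))) [IsProbabilityMeasure μ₀]
    (hsupp : ∀ᵐ p ∂μ₀, p.1 ∈ MSet n ∧ p.2 ∈ MSet n)
    (hstat : μ₀.map Prod.snd = UM n)
    (hclose : ∀ᵐ p ∂μ₀, ∑ q : Fin n × Fin 2, |p.1 q - p.2 q| ≤ (n : ℝ) ^ (-a))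
    (T : ℕ) (hT : (1 / 2 + 2 * c) * n * Real.log n ≤ (T : ℝ)) :
    ∃ P : Measure ((Fin (T + 1) → Fin n × Fin 2 → ℝ) × (Fin (T + 1) → Fin n × Fin 2 → ℝ)),
      P.map Prod.fst = pathM n T (μ₀.map Prod.fst) ∧
      P.map Prod.snd = pathM n T (μ₀.map Prod.snd) ∧
      P.map (fun q => (q.1 0, q.2 0)) = μ₀ ∧
      P {q | q.1 (Fin.last T) ≠ q.2 (Fin.last T)} ≤
        ENNReal.ofReal (10 * (n : ℝ) ^ (3.75 - a / 2) + (n : ℝ) ^ (-c)) := by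
  have hn : 4096 ≤ n := by exact_mod_cast ((le_max_left _ _).trans_lt hn1).le
  obtain ⟨P, hX, hY, hinit, hfail⟩ := narrow_matrices_coupling_for_nearby_points_general hn hc.le
    (Real.rpow_pos_of_pos (by positivity) _) (two_mul_rpow_neg_le (by norm_cast; omega)
      (by linarith)) μ₀ hsupp hstat hclose T hT
  refine ⟨P, hX, hY, hinit, hfail.trans ?_⟩
  rw [ENNReal.ofReal_add (by positivity) (by positivity)]
  exact add_le_add_left (natCast_mul_ofReal_add_ofReal_le (by omega) a) _

end
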